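/- arXiv:1108.2985 — 7 statements merged into one kernel-verified Lean document; each statement's English description precedes it below -/
import Mathlib

section
/- Let n ≥ 1 and d ≥ n be natural numbers. Let M be the complex matrix with rows and columns indexed by S_n defined by M_{π,σ} = d^{l(π⁻¹σ)}. Then M is invertible, and for all complex matrices A, B with rows and columns indexed by functions {1,…,n} → {1,…,d}, one has ∫ Tr(A · U^{⊗n} · B · (U^{⊗n})†) dU = Σ_{π,σ ∈ S_n} Tr(A·V_π) · (M⁻¹)_{π,σ} · Tr(V_{σ⁻¹}·B), where the integral is with respect to the Haar probability measure on the group U(d) of d×d unitary matrices. -/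
open Matrix MeasureTheory

/-- The number of cycles of a permutation counting fixed points: the number of
(nontrivial) cycles in the cycle decomposition plus the number of fixed points. -/
def cycleCount {n : ℕ} (σ : Equiv.Perm (Fin n)) : ℕ :=
  σ.cycleType.card + (Finset.univ.filter fun x => σ x = x).card

/-- The permutation operator `V_π` on `(ℂ^d)^{⊗n}`, with rows and columns indexed by
functions `Fin n → Fin d`: `(V_π)_{f,g} = 1` if `f = g ∘ π` and `0` otherwise. -/
def permOperator (n d : ℕ) (π : Equiv.Perm (Fin n)) :
    Matrix (Fin n → Fin d) (Fin n → Fin d) ℂ :=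
  Matrix.of fun f g => if f = g ∘ π then (1 : ℂ) else 0

/-- The `n`-fold tensor (Kronecker) power `U^{⊗n}` of a `d × d` matrix `U`, with entries
`(U^{⊗n})_{f,g} = ∏ k, U (f k) (g k)`. -/
def tensorPow (n d : ℕ) (U : Matrix (Fin d) (Fin d) ℂ) :
    Matrix (Fin n → Fin d) (Fin n → Fin d) ℂ :=
  Matrix.of fun f g => ∏ k, U (f k) (g k)

/-!
By invariance of the Haar measure, the average `T` of `U^{⊗n} B (U^{⊗n})†` commutes with every
`U^{⊗n}`. Let `X` be any matrix with this property. Commutation with diagonal unitaries whose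
entries are roots of unity forces `X_{f,g} = 0` unless `f = g ∘ π` for some permutation `π`; hence
`X` also commutes with `D^{⊗n}` for every diagonal `D`, and then, by the singular value
decomposition, with `A^{⊗n}` for every matrix `A`. Every column index is `φ ∘ ι` for one fixed
injective `ι`, and the matrix of `φ` is a possible `A`; it follows that `X` is determined by its
column `ι`, in which only the rows `ι ∘ π` can be nonzero. There `V_σ` is the indicator of
`σ = π`, so the `V_σ` are independent and `X` is a combination of them.

The matrix `M` is the Gram matrix of the `V_π` for the trace inner product, so it is invertible and
`M⁻¹` recovers the coefficients of `T` from the traces `Tr(V_{σ⁻¹} T)`. These equal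
`Tr(V_{σ⁻¹} B)`, because `V_{σ⁻¹}` commutes with every `U^{⊗n}`.
-/

section SingularValueDecomposition

open scoped InnerProductSpace

variable {𝕜 E ι : Type*} [RCLike 𝕜] [Fintype ι]

lemma exists_orthonormalBasis_forall_eq_norm_smul [NormedAddCommGroup E] [InnerProductSpace 𝕜 E]
    [FiniteDimensional 𝕜 E] (hcard : Module.finrank 𝕜 E = Fintype.card ι) {w : ι → E}
    (hw : Pairwise fun i j => ⟪w i, w j⟫_𝕜 = 0) :
    ∃ b : OrthonormalBasis ι 𝕜 E, ∀ i, w i = (‖w i‖ : 𝕜) • b i := by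
  have hv : Orthonormal 𝕜 ({i | w i ≠ 0}.domRestrict fun i => (‖w i‖⁻¹ : 𝕜) • w i) :=
    ⟨fun i => norm_smul_inv_norm i.2, fun i j hij => by
      simp [Set.domRestrict, inner_smul_left, inner_smul_right, hw (Subtype.coe_injective.ne hij)]⟩
  obtain ⟨b, hb⟩ := hv.exists_orthonormalBasis_extension_of_card_eq hcard
  refine ⟨b, fun i => ?_⟩
  by_cases hi : w i = 0
  · simp [hi]
  · rw [hb i hi, smul_smul, mul_inv_cancel₀ (by simpa using hi), one_smul]

variable [DecidableEq ι]

lemma exists_unitary_mul_diagonal_mul_unitary (A : Matrix ι ι 𝕜) :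
    ∃ U ∈ unitaryGroup ι 𝕜, ∃ s : ι → 𝕜, ∃ V ∈ unitaryGroup ι 𝕜, A = U * diagonal s * V := by
  have hA : (Aᴴ * A).IsHermitian := isHermitian_conjTranspose_mul_self A
  let V : Matrix ι ι 𝕜 := hA.eigenvectorUnitary
  let w : ι → EuclideanSpace 𝕜 ι := fun j => WithLp.toLp 2 ((A * V).col j)
  have hgram : (A * V)ᴴ * (A * V) = diagonal (RCLike.ofReal ∘ hA.eigenvalues) := by
    rw [← hA.conjStarAlgAut_star_eigenvectorUnitary]
    simp [V, mul_assoc, Unitary.conjStarAlgAut_apply, star_eq_conjTranspose]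
  have hw : Pairwise fun i j => ⟪w i, w j⟫_𝕜 = 0 := fun i j hij => by
    have hij0 := congr_fun₂ hgram i j
    rw [diagonal_apply_ne _ hij] at hij0
    simpa [w, PiLp.inner_apply, mul_apply, mul_comm] using hij0
  obtain ⟨b, hb⟩ := exists_orthonormalBasis_forall_eq_norm_smul (by simp) hw
  have hAV : A * V = (EuclideanSpace.basisFun ι 𝕜).toBasis.toMatrix b
      * diagonal fun j => (‖w j‖ : 𝕜) := by
    ext i j
    simpa [w, Module.Basis.toMatrix_apply, RCLike.real_smul_eq_coe_mul, mul_comm] using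
      congr_fun (congr_arg WithLp.ofLp (hb j)) i
  refine ⟨_, (EuclideanSpace.basisFun ι 𝕜).toMatrix_orthonormalBasis_mem_unitary b, fun j => ‖w j‖,
    star V, Unitary.star_mem hA.eigenvectorUnitary.2, ?_⟩
  rw [← hAV, mul_assoc, Unitary.mul_star_self_of_mem hA.eigenvectorUnitary.2, mul_one]

end SingularValueDecomposition

section Gram

variable {R E ι : Type*} [CommRing R] [AddCommGroup E] [Module R E] [Fintype ι] [DecidableEq ι]

lemma eq_sum_inv_mulVec_smul_of_mem_span {v : ι → E} {φ : ι → E →ₗ[R] R}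
    {G : Matrix ι ι R} (hG : ∀ i j, G i j = φ i (v j)) (hdet : IsUnit G.det) {x : E}
    (hx : x ∈ Submodule.span R (Set.range v)) :
    x = ∑ i, (G⁻¹ *ᵥ fun j => φ j x) i • v i := by
  obtain ⟨c, rfl⟩ := (Submodule.mem_span_range_iff_exists_fun R).1 hx
  have hφ : (fun j => φ j (∑ i, c i • v i)) = G *ᵥ c := by
    ext j
    simp [mulVec, dotProduct, hG, mul_comm]
  rw [hφ, mulVec_mulVec, nonsing_inv_mul _ hdet, one_mulVec]

open scoped ComplexOrder in
lemma isUnit_det_of_trace_conjTranspose_mul {𝕜 m : Type*} [RCLike 𝕜] [Fintype m]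
    {V : ι → Matrix m m 𝕜} (hV : LinearIndependent 𝕜 V) {G : Matrix ι ι 𝕜}
    (hG : ∀ i j, G i j = ((V i)ᴴ * V j).trace) : IsUnit G.det := by
  classical
  let := toMatrixNormedAddCommGroup (1 : Matrix m m 𝕜) .one
  let := toMatrixInnerProductSpace (1 : Matrix m m 𝕜) .one
  have hgram : G = gram 𝕜 V := by
    ext i j
    rw [hG, trace_mul_comm, gram_apply]
    change _ = (V j * 1 * (V i)ᴴ).trace
    rw [mul_one]
  rw [hgram, isUnit_iff_ne_zero]
  exact det_gram_ne_zero_iff_linearIndependent.2 hV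

end Gram

section Twirl

variable {G A : Type*} [Group G] [TopologicalSpace G] [MeasurableSpace G] [BorelSpace G]
  [NormedRing A] [StarRing A] [CStarRing A] [SecondCountableTopologyEither G A]
  {μ : Measure G} {ρ : G →* unitary A}

lemma integrable_unitary_conj [IsFiniteMeasure μ] (hρ : Continuous ρ) (b : A) :
    Integrable (fun g => (ρ g : A) * b * star (ρ g : A)) μ := by
  have hcont : Continuous fun g => (ρ g : A) := continuous_subtype_val.comp hρ
  refine .of_bound ((hcont.mul continuous_const).mul hcont.star).aestronglyMeasurable ‖b‖
    (.of_forall fun g => ?_)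
  rw [← Unitary.coe_star, CStarRing.norm_mul_coe_unitary, CStarRing.norm_coe_unitary_mul]

variable [NormedAlgebra ℂ A]

/-- The twirl of `b`: the average over `G` of its conjugates by the unitary representation `ρ`.
As a Bochner integral it is `0` when the conjugates are not integrable. -/
noncomputable def twirl (μ : Measure G) (ρ : G →* unitary A) (b : A) : A :=
  ∫ g, (ρ g : A) * b * star (ρ g : A) ∂μ

variable [CompleteSpace A]

lemma map_twirl [IsFiniteMeasure μ] {E : Type*} [NormedAddCommGroup E] [NormedSpace ℂ E]
    [CompleteSpace E] (hρ : Continuous ρ) (L : A →L[ℂ] E) (b : A) :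
    L (twirl μ ρ b) = ∫ g, L (ρ g * b * star (ρ g : A)) ∂μ :=
  (L.integral_comp_comm (integrable_unitary_conj hρ b)).symm

lemma commute_twirl [IsFiniteMeasure μ] [ContinuousMul G] [μ.IsMulLeftInvariant]
    (hρ : Continuous ρ) (b : A) (h : G) : Commute (twirl μ ρ b) (ρ h) := by
  symm
  calc (ρ h : A) * twirl μ ρ b
      = ∫ g, (ρ h : A) * (ρ g * b * star (ρ g : A)) ∂μ :=
        map_twirl hρ (ContinuousLinearMap.mul ℂ A (ρ h)) b
    _ = ∫ g, (ρ (h * g) : A) * b * star (ρ (h * g) : A) * ρ h ∂μ := by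
        simp [mul_assoc]
    _ = ∫ g, (ρ g : A) * b * star (ρ g : A) * ρ h ∂μ :=
        integral_mul_left_eq_self (fun g => (ρ g : A) * b * star (ρ g : A) * ρ h) h
    _ = twirl μ ρ b * ρ h :=
        (map_twirl hρ ((ContinuousLinearMap.mul ℂ A).flip (ρ h)) b).symm

lemma map_mul_twirl_of_commute [IsProbabilityMeasure μ] (hρ : Continuous ρ)
    {τ : A →L[ℂ] ℂ} (hτ : ∀ a b, τ (a * b) = τ (b * a)) {a : A} (ha : ∀ g, Commute a (ρ g))
    (b : A) : τ (a * twirl μ ρ b) = τ (a * b) := by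
  have hconj : ∀ g, τ (a * (ρ g * b * star (ρ g : A))) = τ (a * b) := fun g => by
    rw [← mul_assoc, ← mul_assoc, (ha g).eq, hτ, ← mul_assoc, ← mul_assoc,
      Unitary.coe_star_mul_self, one_mul]
  calc τ (a * twirl μ ρ b) = ∫ g, τ (a * (ρ g * b * star (ρ g : A))) ∂μ :=
        map_twirl hρ (τ.comp (ContinuousLinearMap.mul ℂ A a)) b
    _ = τ (a * b) := by simp [hconj]

end Twirl

section Cycles

open Equiv

variable {α β : Type*}

lemma exists_perm_eq_comp_of_card_fiber_eq [Fintype α] [DecidableEq β] {f g : α → β}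
    (h : ∀ b, Fintype.card {a // f a = b} = Fintype.card {a // g a = b}) :
    ∃ π : Perm α, f = g ∘ π :=
  ⟨ofFiberEquiv fun b => Fintype.equivOfCardEq (h b), funext fun a => (ofFiberEquiv_map _ a).symm⟩

lemma comp_perm_eq_self_iff [Finite α] (σ : Perm α) (f : α → β) :
    f ∘ σ = f ↔ Perm.SameCycle.setoid σ ≤ Setoid.ker f := by
  refine ⟨fun h x y hxy => ?_, fun h => funext fun x => (h (?_ : σ.SameCycle x (σ x))).symm⟩
  · obtain ⟨k, -, rfl⟩ := Perm.SameCycle.exists_pow_eq' hxy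
    have hsemi : Function.Semiconj f σ id := congr_fun h
    simpa [← Perm.iterate_eq_pow] using ((hsemi.iterate_right k) x).symm
  · exact Perm.sameCycle_apply_right.2 .rfl

lemma card_fixedPoints_comp_perm [Finite α] (σ : Perm α) :
    Nat.card {f : α → β // f ∘ σ = f} =
      Nat.card β ^ Nat.card (Quotient (Perm.SameCycle.setoid σ)) := by
  rw [Nat.card_congr ((subtypeEquivRight (comp_perm_eq_self_iff σ)).trans (Setoid.liftEquiv _)),
    Nat.card_fun]

variable [Fintype α] [DecidableEq α]

/-- The label of the cycle of `σ` through `x`: the cycle itself, or `x` when `x` is a fixed point.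
Its values correspond to the cycles of `σ` counted with fixed points. -/
def cycleLabel (σ : Perm α) (x : α) : Perm α ⊕ α :=
  if σ x = x then .inr x else .inl (σ.cycleOf x)

lemma cycleLabel_eq_iff_sameCycle {σ : Perm α} {x y : α} :
    cycleLabel σ x = cycleLabel σ y ↔ σ.SameCycle x y := by
  by_cases hx : σ x = x <;> by_cases hy : σ y = y
  · simp only [cycleLabel, hx, hy, if_true, Sum.inr.injEq]
    exact ⟨fun h => h ▸ .rfl, fun h => h.eq_of_left hx⟩
  · simpa [cycleLabel, hx, hy] using fun h : σ.SameCycle x y => hy (h.apply_eq_self_iff.1 hx)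
  · simpa [cycleLabel, hx, hy] using fun h : σ.SameCycle x y => hx (h.apply_eq_self_iff.2 hy)
  · simp only [cycleLabel, hx, hy, if_false, Sum.inl.injEq]
    exact (Perm.sameCycle_iff_cycleOf_eq_of_mem_support
      (Perm.mem_support.2 hx) (Perm.mem_support.2 hy)).symm

lemma range_cycleLabel (σ : Perm α) :
    Set.range (cycleLabel σ) = σ.cycleFactorsFinset.disjSum {x | σ x = x} := by
  ext (c | x)
  · suffices (∃ x, σ x ≠ x ∧ σ.cycleOf x = c) ↔ c ∈ σ.cycleFactorsFinset by
      simpa [cycleLabel, ite_eq_iff]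
    refine ⟨?_, fun hc => ?_⟩
    · rintro ⟨x, hx, rfl⟩
      exact Perm.cycleOf_mem_cycleFactorsFinset_iff.2 (Perm.mem_support.2 hx)
    · obtain ⟨x, hx⟩ := (Perm.mem_cycleFactorsFinset_iff.1 hc).1.nonempty_support
      exact ⟨x, Perm.mem_support.1 (Perm.mem_cycleFactorsFinset_support_le hc hx),
        (Perm.cycle_is_cycleOf hx hc).symm⟩
  · simp [cycleLabel, ite_eq_iff]

lemma card_quotient_sameCycle (σ : Perm α) :
    Nat.card (Quotient (Perm.SameCycle.setoid σ))
      = σ.cycleType.card + (Finset.univ.filter fun x => σ x = x).card := by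
  have hker : Perm.SameCycle.setoid σ = Setoid.ker (cycleLabel σ) :=
    Setoid.ext fun _ _ => cycleLabel_eq_iff_sameCycle.symm
  rw [hker, Nat.card_congr (Setoid.quotientKerEquivRange _), range_cycleLabel]
  simp [Perm.cycleType_def]

end Cycles

section PermOperator

open Equiv

variable {n d : ℕ}

lemma permOperator_eq_permMatrix (π : Perm (Fin n)) :
    permOperator n d π = Perm.permMatrix ℂ (π.arrowCongr (Equiv.refl (Fin d))) := by
  ext f g
  have hfg : f = g ∘ π ↔ π.arrowCongr (Equiv.refl (Fin d)) f = g := (comp_symm_eq π g f).symm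
  simp [permOperator, toPEquiv_apply, PEquiv.toMatrix_apply, hfg]

lemma permOperator_mul (π σ : Perm (Fin n)) :
    permOperator n d π * permOperator n d σ = permOperator n d (σ * π) := by
  simp only [permOperator_eq_permMatrix, ← permMatrix_mul]
  rfl

lemma conjTranspose_permOperator (π : Perm (Fin n)) :
    (permOperator n d π)ᴴ = permOperator n d π⁻¹ := by
  simp only [permOperator_eq_permMatrix, conjTranspose_permMatrix]
  rfl

lemma trace_permOperator (σ : Perm (Fin n)) :
    (permOperator n d σ).trace = (d : ℂ) ^ cycleCount σ := by
  have hcard := card_fixedPoints_comp_perm (β := Fin d) σ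
  rw [card_quotient_sameCycle, Nat.card_fin, Nat.card_eq_fintype_card, Fintype.card_subtype]
    at hcard
  simp only [permOperator, trace, diag_apply, of_apply, Finset.sum_boole, eq_comm (b := _ ∘ σ)]
  exact_mod_cast hcard

lemma trace_conjTranspose_permOperator_mul (π σ : Perm (Fin n)) :
    ((permOperator n d π)ᴴ * permOperator n d σ).trace = (d : ℂ) ^ cycleCount (π⁻¹ * σ) := by
  rw [conjTranspose_permOperator, trace_mul_comm, permOperator_mul, trace_permOperator]

lemma permOperator_comp_apply {ι : Fin n → Fin d} (hι : ι.Injective) (π σ : Perm (Fin n)) :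
    permOperator n d σ (ι ∘ π) ι = if π = σ then 1 else 0 := by
  simp [permOperator, hι.comp_left.eq_iff, DFunLike.coe_fn_eq]

lemma sum_smul_permOperator_comp_apply {ι : Fin n → Fin d} (hι : ι.Injective)
    (c : Perm (Fin n) → ℂ) (π : Perm (Fin n)) :
    (∑ σ, c σ • permOperator n d σ) (ι ∘ π) ι = c π := by
  simp [Matrix.sum_apply, permOperator_comp_apply hι]

lemma linearIndependent_permOperator (hnd : n ≤ d) : LinearIndependent ℂ (permOperator n d) :=
  Fintype.linearIndependent_iff.2 fun c hc π => by
    rw [← sum_smul_permOperator_comp_apply (Fin.castLE_injective hnd) c π, hc, Matrix.zero_apply]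

end PermOperator

section TensorPow

open Equiv

variable {n d : ℕ}

lemma tensorPow_mul (A B : Matrix (Fin d) (Fin d) ℂ) :
    tensorPow n d (A * B) = tensorPow n d A * tensorPow n d B := by
  ext f g
  simp [tensorPow, mul_apply, Finset.prod_univ_sum, Finset.prod_mul_distrib]

lemma tensorPow_diagonal (D : Fin d → ℂ) :
    tensorPow n d (diagonal D) = diagonal fun f => ∏ k, D (f k) := by
  ext f g
  simp [tensorPow, diagonal_apply, Fintype.prod_ite_zero, funext_iff]

lemma tensorPow_one : tensorPow n d 1 = 1 := by
  simp [← diagonal_one, tensorPow_diagonal]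

lemma conjTranspose_tensorPow (A : Matrix (Fin d) (Fin d) ℂ) :
    (tensorPow n d A)ᴴ = tensorPow n d Aᴴ := by
  ext f g
  simp [tensorPow]

lemma tensorPow_of_ite (φ : Fin d → Fin d) :
    tensorPow n d (of fun a b => if a = φ b then 1 else 0)
      = of fun f g => if f = φ ∘ g then 1 else 0 := by
  ext f g
  simp [tensorPow, Fintype.prod_boole, funext_iff]

lemma commute_permOperator_tensorPow (π : Perm (Fin n)) (A : Matrix (Fin d) (Fin d) ℂ) :
    Commute (permOperator n d π) (tensorPow n d A) := by
  ext f g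
  rw [permOperator_eq_permMatrix, PEquiv.toMatrix_toPEquiv_mul, PEquiv.mul_toMatrix_toPEquiv]
  simp only [tensorPow, submatrix_apply, of_apply, id]
  exact Fintype.prod_equiv π.symm _ _ fun k => by simp

end TensorPow

section SchurWeyl

open Equiv

variable {n d : ℕ} {X : Matrix (Fin n → Fin d) (Fin n → Fin d) ℂ}

lemma exists_perm_eq_comp_of_commute_tensorPow
    (hX : ∀ U ∈ unitaryGroup (Fin d) ℂ, Commute X (tensorPow n d U)) {f g : Fin n → Fin d}
    (hfg : X f g ≠ 0) : ∃ π : Perm (Fin n), f = g ∘ π := by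
  refine exists_perm_eq_comp_of_card_fiber_eq fun j => ?_
  -- Fibres have at most `n` points, so a root of unity of order `n + 1` compares them.
  have hζ := Complex.isPrimitiveRoot_exp (n + 1) n.succ_ne_zero
  set ζ := Complex.exp (2 * Real.pi * Complex.I / (n + 1 : ℕ))
  let D : Fin d → ℂ := fun i => if i = j then ζ else 1
  have hD : diagonal D ∈ unitaryGroup (Fin d) ℂ := by
    have hζζ : ζ * (starRingEnd ℂ) ζ = 1 := by
      simp [Complex.mul_conj', hζ.norm'_eq_one n.succ_ne_zero]
    rw [mem_unitaryGroup_iff, star_eq_conjTranspose, diagonal_conjTranspose,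
      diagonal_mul_diagonal, diagonal_eq_one]
    ext i
    by_cases hi : i = j <;> simp [D, hi, hζζ]
  have hentry := congr_fun₂ (hX _ hD).eq f g
  rw [tensorPow_diagonal, mul_diagonal, diagonal_mul, mul_comm] at hentry
  have hpow (f : Fin n → Fin d) : ∏ k, D (f k) = ζ ^ Fintype.card {k // f k = j} := by
    simp [D, Finset.prod_ite, Fintype.card_subtype]
  have hlt (f : Fin n → Fin d) : Fintype.card {k // f k = j} < n + 1 :=
    Nat.lt_succ_of_le ((Fintype.card_subtype_le _).trans_eq (Fintype.card_fin n))
  refine hζ.pow_inj (hlt f) (hlt g) ?_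
  rw [← hpow, ← hpow, mul_right_cancel₀ hfg hentry]

lemma commute_tensorPow_diagonal_of_commute_unitary
    (hX : ∀ U ∈ unitaryGroup (Fin d) ℂ, Commute X (tensorPow n d U)) (D : Fin d → ℂ) :
    Commute X (tensorPow n d (diagonal D)) := by
  ext f g
  rw [tensorPow_diagonal, mul_diagonal, diagonal_mul, mul_comm]
  by_cases hfg : X f g = 0
  · simp [hfg]
  · obtain ⟨π, rfl⟩ := exists_perm_eq_comp_of_commute_tensorPow hX hfg
    simp [prod_comp π fun k => D (g k)]

lemma commute_tensorPow_of_commute_unitary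
    (hX : ∀ U ∈ unitaryGroup (Fin d) ℂ, Commute X (tensorPow n d U))
    (A : Matrix (Fin d) (Fin d) ℂ) : Commute X (tensorPow n d A) := by
  obtain ⟨U, hU, s, V, hV, rfl⟩ := exists_unitary_mul_diagonal_mul_unitary A
  rw [tensorPow_mul, tensorPow_mul]
  have hs := commute_tensorPow_diagonal_of_commute_unitary hX s
  exact ((hX U hU).mul_right hs).mul_right (hX V hV)

lemma eq_zero_of_commute_tensorPow (hX : ∀ A, Commute X (tensorPow n d A)) {ι : Fin n → Fin d}
    (hι : ι.Injective) (hcol : ∀ f, X f ι = 0) : X = 0 := by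
  ext f g
  have hg : Function.extend ι g id ∘ ι = g := funext (hι.extend_apply g id)
  have hentry :=
    congr_fun₂ (hX (of fun a b => if a = Function.extend ι g id b then 1 else 0)).eq f ι
  simpa [tensorPow_of_ite, mul_apply, hcol, hg] using hentry

lemma mem_span_permOperator_of_commute_tensorPow (hnd : n ≤ d)
    (hX : ∀ U ∈ unitaryGroup (Fin d) ℂ, Commute X (tensorPow n d U)) :
    X ∈ Submodule.span ℂ (Set.range (permOperator n d)) := by
  let ι : Fin n → Fin d := Fin.castLE hnd
  have hι : ι.Injective := Fin.castLE_injective hnd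
  let c : Perm (Fin n) → ℂ := fun π => X (ι ∘ π) ι
  have hcomm : ∀ U ∈ unitaryGroup (Fin d) ℂ,
      Commute (X - ∑ σ, c σ • permOperator n d σ) (tensorPow n d U) := fun U hU =>
    (hX U hU).sub_left <| Commute.sum_left _ _ _ fun σ _ =>
      (commute_permOperator_tensorPow σ U).smul_left (c σ)
  refine (Submodule.mem_span_range_iff_exists_fun ℂ).2 ⟨c, ?_⟩
  refine Eq.symm <| sub_eq_zero.1 <|
    eq_zero_of_commute_tensorPow (commute_tensorPow_of_commute_unitary hcomm) hι fun f => ?_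
  by_contra hf
  obtain ⟨π, rfl⟩ := exists_perm_eq_comp_of_commute_tensorPow hcomm hf
  rw [Matrix.sub_apply, sum_smul_permOperator_comp_apply hι] at hf
  exact hf (sub_self _)

end SchurWeyl

section UnitaryTwirl

open scoped Matrix.Norms.L2Operator

/-- `U ↦ U^{⊗n}` as a unitary representation of `U(d)` on `(ℂ^d)^{⊗n}`. -/
noncomputable def tensorPowRep (n d : ℕ) :
    unitaryGroup (Fin d) ℂ →* unitaryGroup (Fin n → Fin d) ℂ :=
  (Unitary.map
    { toFun := tensorPow n d
      map_one' := tensorPow_one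
      map_mul' := tensorPow_mul
      map_star' := fun A => (conjTranspose_tensorPow A).symm }).toMonoidHom

lemma continuous_tensorPowRep {n d : ℕ} : Continuous (tensorPowRep n d) :=
  continuous_induced_rng.2 <| continuous_matrix fun f g =>
    continuous_finsetProd Finset.univ fun k _ => continuous_subtype_val.matrix_elem (f k) (g k)

variable {n d : ℕ} [MeasurableSpace (unitaryGroup (Fin d) ℂ)]

/-- The twirl `∫ U^{⊗n} B (U^{⊗n})† dμ(U)` of `B`, a Bochner integral for the operator norm on
matrices. -/
noncomputable def tensorPowTwirl (μ : Measure (unitaryGroup (Fin d) ℂ))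
    (B : Matrix (Fin n → Fin d) (Fin n → Fin d) ℂ) : Matrix (Fin n → Fin d) (Fin n → Fin d) ℂ :=
  twirl μ (tensorPowRep n d) B

variable [BorelSpace (unitaryGroup (Fin d) ℂ)] {μ : Measure (unitaryGroup (Fin d) ℂ)}

lemma integral_trace_mul_tensorPow_conj [IsFiniteMeasure μ]
    (A B : Matrix (Fin n → Fin d) (Fin n → Fin d) ℂ) :
    ∫ U : unitaryGroup (Fin d) ℂ, (A * tensorPow n d U * B * (tensorPow n d U)ᴴ).trace ∂μ
      = (A * tensorPowTwirl μ B).trace := by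
  let L := (traceLinearMap (Fin n → Fin d) ℂ ℂ ∘ₗ LinearMap.mulLeft ℂ A).toContinuousLinearMap
  refine Eq.trans ?_ (map_twirl continuous_tensorPowRep L B).symm
  simp [L, mul_assoc, tensorPowRep, star_eq_conjTranspose]

lemma trace_permOperator_mul_tensorPowTwirl [IsProbabilityMeasure μ] (σ : Equiv.Perm (Fin n))
    (B : Matrix (Fin n → Fin d) (Fin n → Fin d) ℂ) :
    (permOperator n d σ * tensorPowTwirl μ B).trace = (permOperator n d σ * B).trace :=
  map_mul_twirl_of_commute continuous_tensorPowRep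
    (τ := (traceLinearMap (Fin n → Fin d) ℂ ℂ).toContinuousLinearMap) trace_mul_comm
    (fun U => commute_permOperator_tensorPow σ U.1) B

lemma tensorPowTwirl_mem_span_permOperator [IsFiniteMeasure μ] [μ.IsMulLeftInvariant] (hnd : n ≤ d)
    (B : Matrix (Fin n → Fin d) (Fin n → Fin d) ℂ) :
    tensorPowTwirl μ B ∈ Submodule.span ℂ (Set.range (permOperator n d)) :=
  mem_span_permOperator_of_commute_tensorPow hnd fun U hU =>
    commute_twirl continuous_tensorPowRep B ⟨U, hU⟩

end UnitaryTwirl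

theorem twirl_formula (n d : ℕ) (hn : 1 ≤ n) (hnd : n ≤ d)
    (M : Matrix (Equiv.Perm (Fin n)) (Equiv.Perm (Fin n)) ℂ)
    (hM : ∀ π σ : Equiv.Perm (Fin n), M π σ = (d : ℂ) ^ cycleCount (π⁻¹ * σ)) :
    IsUnit M.det ∧
      letI : MeasurableSpace (Matrix.unitaryGroup (Fin d) ℂ) := borel _
      ∀ μ : Measure (Matrix.unitaryGroup (Fin d) ℂ),
        μ.IsHaarMeasure → IsProbabilityMeasure μ →
        ∀ A B : Matrix (Fin n → Fin d) (Fin n → Fin d) ℂ,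
          (∫ U : Matrix.unitaryGroup (Fin d) ℂ,
              (A * tensorPow n d (U : Matrix (Fin d) (Fin d) ℂ) * B
                * (tensorPow n d (U : Matrix (Fin d) (Fin d) ℂ))ᴴ).trace ∂μ)
            = ∑ π : Equiv.Perm (Fin n), ∑ σ : Equiv.Perm (Fin n),
                (A * permOperator n d π).trace * M⁻¹ π σ
                  * (permOperator n d σ⁻¹ * B).trace := by
  have hdet : IsUnit M.det := isUnit_det_of_trace_conjTranspose_mul
    (linearIndependent_permOperator hnd) fun π σ => by
      rw [hM, trace_conjTranspose_permOperator_mul]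
  refine ⟨hdet, ?_⟩
  let : MeasurableSpace (unitaryGroup (Fin d) ℂ) := borel _
  have : BorelSpace (unitaryGroup (Fin d) ℂ) := ⟨rfl⟩
  intro μ _ _ A B
  let φ (σ : Equiv.Perm (Fin n)) :=
    traceLinearMap (Fin n → Fin d) ℂ ℂ ∘ₗ LinearMap.mulLeft ℂ (permOperator n d σ⁻¹)
  have hMφ : ∀ π σ, M π σ = φ π (permOperator n d σ) := fun π σ => by
    rw [hM, ← trace_conjTranspose_permOperator_mul, conjTranspose_permOperator]
    rfl
  have hφ : ∀ σ, φ σ (tensorPowTwirl μ B) = (permOperator n d σ⁻¹ * B).trace := fun σ =>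
    trace_permOperator_mul_tensorPowTwirl σ⁻¹ B
  rw [integral_trace_mul_tensorPow_conj, eq_sum_inv_mulVec_smul_of_mem_span hMφ hdet
    (tensorPowTwirl_mem_span_permOperator hnd B)]
  simp only [hφ, mulVec, dotProduct, Matrix.mul_sum, Matrix.mul_smul, trace_sum, trace_smul,
    smul_eq_mul, Finset.sum_mul]
  exact Finset.sum_congr rfl fun π _ => Finset.sum_congr rfl fun σ _ => by ring
end

section
/- Let d_S, d_B ≥ 1 and let H = ℂ^{d_S}⊗ℂ^{d_B}. Let σ be any complex matrix on H, let (P_i)_{i∈I} be a finite family of complex matrices on H with P_i·P_j = δ_{ij}·P_i, P_i† = P_i and Σ_i P_i = 1, let (E_i)_{i∈I} be real numbers, t ∈ ℝ, and set W₀ = Σ_i e^{i t E_i}·P_i (so that W₀† = Σ_i e^{−i t E_i}·P_i). Let U be a unitary matrix on H. Define ρ_S = Tr_B( (U W₀ U†)† · σ · (U W₀ U†) ) and ω_S = Tr_B( Σ_i (U P_i U†) · σ · (U P_i U†) ). Then Tr[(ρ_S − ω_S)²] = Tr[ Y · U^{⊗4} · X · (U^{⊗4})† ], where, labelling the four tensor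 copies of H by 1,2,3,4: X = W₀⊗W₀⊗W₀†⊗W₀† − Σ_i W₀⊗P_i⊗W₀†⊗P_i − Σ_i P_i⊗W₀⊗P_i⊗W₀† + Σ_{i,j} P_i⊗P_j⊗P_i⊗P_j, and Y = V_{12:34}·(σ⊗σ⊗𝔽), with 𝔽 the operator on copies 3 and 4 that swaps the two ℂ^{d_S} factors and acts as the identity on the two ℂ^{d_B} factors, and V_{12:34} the operator on H^{⊗4} that swaps the block of copies (1,2) with the block of copies (3,4). -/
/-!
Two instances of the swap trick carry the proof. On `(H ⊗ H) ⊗ (H ⊗ H)` the block swap gives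
`Tr[V (K ⊗ L)] = Tr[K L]`; on `H ⊗ H` the swap of the system factors alone gives
`Tr[𝔽 (K ⊗ L)] = Tr[Tr_B K · Tr_B L]`. Together with cyclicity of the trace they show that
`V (σ ⊗ σ ⊗ 𝔽)` represents the form
`A ⊗ B ⊗ C ⊗ D ↦ Tr[Tr_B (C σ A) · Tr_B (D σ B)]`.
Conjugating by `U^{⊗4}` replaces each tensor factor by its conjugate under `U`, and the four terms
of `X` are those of the expansion of `(ρ_S - ω_S)²`.
-/

open Matrix

/-- Partial trace over the bath `B` of a matrix on `ℂ^{d_S} ⊗ ℂ^{d_B}`. -/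
noncomputable def ptraceB (dS dB : ℕ) (X : Matrix (Fin dS × Fin dB) (Fin dS × Fin dB) ℂ) :
    Matrix (Fin dS) (Fin dS) ℂ :=
  Matrix.of fun s s' => ∑ b : Fin dB, X (s, b) (s', b)

/-- Fourfold tensor product `A ⊗ B ⊗ C ⊗ D` of matrices on `H`, defined entrywise
on quadruple indices. -/
def tens4 {H : Type*} (A B C D : Matrix H H ℂ) :
    Matrix (H × H × H × H) (H × H × H × H) ℂ :=
  Matrix.of fun a b =>
    A a.1 b.1 * B a.2.1 b.2.1 * C a.2.2.1 b.2.2.1 * D a.2.2.2 b.2.2.2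

/-- The operator `V_{12:34}` on `H^{⊗4}` swapping the block of copies `(1,2)` with the block
of copies `(3,4)`. -/
def swap1234 {H : Type*} [DecidableEq H] : Matrix (H × H × H × H) (H × H × H × H) ℂ :=
  Matrix.of fun a b =>
    if a.1 = b.2.2.1 ∧ a.2.1 = b.2.2.2 ∧ a.2.2.1 = b.1 ∧ a.2.2.2 = b.2.1 then (1 : ℂ) else 0

/-- The operator `σ ⊗ σ ⊗ 𝔽` on `H^{⊗4}`, where `𝔽` acts on copies 3 and 4 by swapping the
two `ℂ^{d_S}` factors and acting as the identity on the two `ℂ^{d_B}` factors. -/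
def sigmaSigmaF (dS dB : ℕ) (σ : Matrix (Fin dS × Fin dB) (Fin dS × Fin dB) ℂ) :
    Matrix ((Fin dS × Fin dB) × (Fin dS × Fin dB) × (Fin dS × Fin dB) × (Fin dS × Fin dB))
      ((Fin dS × Fin dB) × (Fin dS × Fin dB) × (Fin dS × Fin dB) × (Fin dS × Fin dB)) ℂ :=
  Matrix.of fun a b =>
    σ a.1 b.1 * σ a.2.1 b.2.1 *
      (if a.2.2.1 = (b.2.2.2.1, b.2.2.1.2) ∧ a.2.2.2 = (b.2.2.1.1, b.2.2.2.2)
        then (1 : ℂ) else 0)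

open scoped Kronecker

section SwapTrick

variable {n R : Type*} [Fintype n]

theorem trace_reindex {m : Type*} [Fintype m] [AddCommMonoid R] (e : m ≃ n) (M : Matrix m m R) :
    (reindex e e M).trace = M.trace :=
  e.symm.sum_comp fun i => M i i

theorem trace_permMatrix_prodComm_mul_kronecker [DecidableEq n] [NonAssocSemiring R]
    (K L : Matrix n n R) :
    (Equiv.Perm.permMatrix R (Equiv.prodComm n n) * (K ⊗ₖ L)).trace = (K * L).trace := by
  rw [PEquiv.toMatrix_toPEquiv_mul]
  simp only [trace, diag_apply, submatrix_apply, kronecker_apply, mul_apply,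
    Equiv.prodComm_apply, Prod.swap, id, Fintype.sum_prod_type]
  exact Finset.sum_comm

end SwapTrick

/-- The permutation of the basis of `(S ⊗ B) ⊗ (S ⊗ B)` that exchanges the two `S` factors and
fixes the two `B` factors; its permutation matrix is the operator `𝔽`. -/
def systemSwap (S B : Type*) : Equiv.Perm ((S × B) × (S × B)) where
  toFun x := ((x.2.1, x.1.2), (x.1.1, x.2.2))
  invFun x := ((x.2.1, x.1.2), (x.1.1, x.2.2))

theorem trace_permMatrix_systemSwap_mul_kronecker {dS dB : ℕ}
    (K L : Matrix (Fin dS × Fin dB) (Fin dS × Fin dB) ℂ) :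
    ((systemSwap (Fin dS) (Fin dB)).permMatrix ℂ * (K ⊗ₖ L)).trace
      = (ptraceB dS dB K * ptraceB dS dB L).trace := by
  rw [PEquiv.toMatrix_toPEquiv_mul]
  simp only [trace, diag_apply, submatrix_apply, kronecker_apply, mul_apply, systemSwap,
    Equiv.coe_fn_mk, id, ptraceB, of_apply, Fintype.sum_prod_type, Finset.sum_mul_sum]
  rw [Finset.sum_comm_cycle]

theorem ptraceB_sum {ι : Type*} (s : Finset ι) {dS dB : ℕ}
    (M : ι → Matrix (Fin dS × Fin dB) (Fin dS × Fin dB) ℂ) :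
    ptraceB dS dB (∑ i ∈ s, M i) = ∑ i ∈ s, ptraceB dS dB (M i) := by
  ext a b
  simp only [ptraceB, of_apply, Matrix.sum_apply]
  exact Finset.sum_comm

section FourCopies

variable {H : Type*}

/-- The identification of operators on `(H ⊗ H) ⊗ (H ⊗ H)` with operators on `H^{⊗4}`, whose basis
is indexed by right-nested quadruples. -/
def regroup (H : Type*) [Fintype H] :
    Matrix ((H × H) × (H × H)) ((H × H) × (H × H)) ℂ ≃+* Matrix (H × H × H × H) (H × H × H × H) ℂ :=
  reindexRingEquiv ℂ (Equiv.prodAssoc H H (H × H))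

theorem trace_regroup [Fintype H] (M : Matrix ((H × H) × (H × H)) ((H × H) × (H × H)) ℂ) :
    (regroup H M).trace = M.trace :=
  trace_reindex _ M

theorem tens4_eq_regroup [Fintype H] (A B C D : Matrix H H ℂ) :
    tens4 A B C D = regroup H ((A ⊗ₖ B) ⊗ₖ (C ⊗ₖ D)) := by
  ext a b
  exact mul_assoc _ _ _

theorem swap1234_eq_regroup [Fintype H] [DecidableEq H] :
    swap1234 = regroup H (Equiv.Perm.permMatrix ℂ (Equiv.prodComm (H × H) (H × H))) := by
  ext ⟨a₁, a₂, a₃, a₄⟩ ⟨b₁, b₂, b₃, b₄⟩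
  have hswap : a₁ = b₃ ∧ a₂ = b₄ ∧ a₃ = b₁ ∧ a₄ = b₂ ↔
      (a₃ = b₁ ∧ a₄ = b₂) ∧ a₁ = b₃ ∧ a₂ = b₄ := by
    tauto
  simp [swap1234, regroup, PEquiv.toMatrix_apply, hswap]

theorem sigmaSigmaF_eq_regroup {dS dB : ℕ} (σ : Matrix (Fin dS × Fin dB) (Fin dS × Fin dB) ℂ) :
    sigmaSigmaF dS dB σ
      = regroup _ ((σ ⊗ₖ σ) ⊗ₖ (systemSwap (Fin dS) (Fin dB)).permMatrix ℂ) := by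
  ext ⟨a₁, a₂, a₃, a₄⟩ ⟨b₁, b₂, b₃, b₄⟩
  have hswap : a₃ = (b₄.1, b₃.2) ∧ a₄ = (b₃.1, b₄.2) ↔
      (a₄.1, a₃.2) = b₃ ∧ (a₃.1, a₄.2) = b₄ := by
    grind
  simp [sigmaSigmaF, regroup, PEquiv.toMatrix_apply, systemSwap, hswap]

theorem tens4_mul_tens4 [Fintype H] (A B C D A' B' C' D' : Matrix H H ℂ) :
    tens4 A B C D * tens4 A' B' C' D' = tens4 (A * A') (B * B') (C * C') (D * D') := by
  simp only [tens4_eq_regroup, ← map_mul, ← mul_kronecker_mul]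

theorem conjTranspose_tens4 (A B C D : Matrix H H ℂ) :
    (tens4 A B C D)ᴴ = tens4 Aᴴ Bᴴ Cᴴ Dᴴ := by
  ext a b
  simp [tens4]

end FourCopies

section Twirl

variable {dS dB : ℕ} (σ : Matrix (Fin dS × Fin dB) (Fin dS × Fin dB) ℂ)

theorem trace_swap1234_mul_sigmaSigmaF_mul_tens4
    (A B C D : Matrix (Fin dS × Fin dB) (Fin dS × Fin dB) ℂ) :
    (swap1234 * sigmaSigmaF dS dB σ * tens4 A B C D).trace
      = (ptraceB dS dB (C * σ * A) * ptraceB dS dB (D * σ * B)).trace := by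
  set F := (systemSwap (Fin dS) (Fin dB)).permMatrix ℂ
  calc
    (swap1234 * sigmaSigmaF dS dB σ * tens4 A B C D).trace
        = (Equiv.Perm.permMatrix ℂ (Equiv.prodComm _ _)
            * (((σ * A) ⊗ₖ (σ * B)) ⊗ₖ (F * (C ⊗ₖ D)))).trace := by
      rw [swap1234_eq_regroup, sigmaSigmaF_eq_regroup, tens4_eq_regroup, ← map_mul, ← map_mul,
        trace_regroup, mul_assoc, ← mul_kronecker_mul, ← mul_kronecker_mul]
    _ = (((σ * A) ⊗ₖ (σ * B)) * (F * (C ⊗ₖ D))).trace :=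
      trace_permMatrix_prodComm_mul_kronecker _ _
    _ = (F * ((C * σ * A) ⊗ₖ (D * σ * B))).trace := by
      rw [trace_mul_comm, mul_assoc, ← mul_kronecker_mul, ← mul_assoc, ← mul_assoc]
    _ = (ptraceB dS dB (C * σ * A) * ptraceB dS dB (D * σ * B)).trace :=
      trace_permMatrix_systemSwap_mul_kronecker _ _

theorem trace_swap1234_mul_sigmaSigmaF_mul_conj_tens4
    (U A B C D : Matrix (Fin dS × Fin dB) (Fin dS × Fin dB) ℂ) :
    (swap1234 * sigmaSigmaF dS dB σ * tens4 U U U U * tens4 A B C D * (tens4 U U U U)ᴴ).trace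
      = (ptraceB dS dB ((U * C * Uᴴ) * σ * (U * A * Uᴴ))
        * ptraceB dS dB ((U * D * Uᴴ) * σ * (U * B * Uᴴ))).trace := by
  rw [mul_assoc, mul_assoc, conjTranspose_tens4, tens4_mul_tens4, tens4_mul_tens4,
    trace_swap1234_mul_sigmaSigmaF_mul_tens4]
  simp only [mul_assoc]

theorem distance_to_equilibrium_as_fourfold_twirl_general {I : Type*} [Fintype I]
    (P : I → Matrix (Fin dS × Fin dB) (Fin dS × Fin dB) ℂ)
    (W U : Matrix (Fin dS × Fin dB) (Fin dS × Fin dB) ℂ)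
    (ρS ωS : Matrix (Fin dS) (Fin dS) ℂ)
    (hρS : ρS = ptraceB dS dB ((U * W * Uᴴ)ᴴ * σ * (U * W * Uᴴ)))
    (hωS : ωS = ptraceB dS dB (∑ i, (U * P i * Uᴴ) * σ * (U * P i * Uᴴ))) :
    ((ρS - ωS) * (ρS - ωS)).trace
      = (swap1234 * sigmaSigmaF dS dB σ * tens4 U U U U
          * (tens4 W W Wᴴ Wᴴ - ∑ i, tens4 W (P i) Wᴴ (P i) - ∑ i, tens4 (P i) W (P i) Wᴴ
            + ∑ i, ∑ j, tens4 (P i) (P j) (P i) (P j))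
          * (tens4 U U U U)ᴴ).trace := by
  let τ i := ptraceB dS dB ((U * P i * Uᴴ) * σ * (U * P i * Uᴴ))
  replace hρS : ρS = ptraceB dS dB ((U * Wᴴ * Uᴴ) * σ * (U * W * Uᴴ)) := by
    simpa only [conjTranspose_mul, conjTranspose_conjTranspose, mul_assoc] using hρS
  replace hωS : ωS = ∑ i, τ i := by rw [hωS, ptraceB_sum]
  calc
    ((ρS - ωS) * (ρS - ωS)).trace
        = (ρS * ρS - ρS * ωS - ωS * ρS + ωS * ωS).trace := by noncomm_ring
    _ = (ρS * ρS).trace - ∑ i, (ρS * τ i).trace - ∑ i, (τ i * ρS).trace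
          + ∑ i, ∑ j, (τ i * τ j).trace := by
      rw [hωS, Finset.sum_mul_sum, Finset.mul_sum, Finset.sum_mul]
      simp only [trace_add, trace_sub, trace_sum]
    _ = _ := by
      simp only [τ, hρS, mul_add, mul_sub, add_mul, sub_mul, Finset.mul_sum, Finset.sum_mul,
        trace_add, trace_sub, trace_sum, trace_swap1234_mul_sigmaSigmaF_mul_conj_tens4]

end Twirl

theorem distance_to_equilibrium_as_fourfold_twirl
    (dS dB : ℕ) (hS : 1 ≤ dS) (hB : 1 ≤ dB)
    {I : Type*} [Fintype I] [DecidableEq I]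
    (σ : Matrix (Fin dS × Fin dB) (Fin dS × Fin dB) ℂ)
    (P : I → Matrix (Fin dS × Fin dB) (Fin dS × Fin dB) ℂ)
    (hPmul : ∀ i j, P i * P j = if i = j then P i else 0)
    (hPherm : ∀ i, (P i)ᴴ = P i)
    (hPsum : ∑ i, P i = 1)
    (E : I → ℝ) (t : ℝ)
    (W₀ : Matrix (Fin dS × Fin dB) (Fin dS × Fin dB) ℂ)
    (hW₀ : W₀ = ∑ i, Complex.exp (Complex.I * (t : ℂ) * (E i : ℂ)) • P i)
    (U : Matrix (Fin dS × Fin dB) (Fin dS × Fin dB) ℂ)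
    (hU : U ∈ Matrix.unitaryGroup (Fin dS × Fin dB) ℂ)
    (ρS ωS : Matrix (Fin dS) (Fin dS) ℂ)
    (hρS : ρS = ptraceB dS dB ((U * W₀ * Uᴴ)ᴴ * σ * (U * W₀ * Uᴴ)))
    (hωS : ωS = ptraceB dS dB (∑ i, (U * P i * Uᴴ) * σ * (U * P i * Uᴴ)))
    (X Y : Matrix ((Fin dS × Fin dB) × (Fin dS × Fin dB) × (Fin dS × Fin dB) × (Fin dS × Fin dB))
      ((Fin dS × Fin dB) × (Fin dS × Fin dB) × (Fin dS × Fin dB) × (Fin dS × Fin dB)) ℂ)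
    (hX : X = tens4 W₀ W₀ W₀ᴴ W₀ᴴ
        - ∑ i, tens4 W₀ (P i) W₀ᴴ (P i)
        - ∑ i, tens4 (P i) W₀ (P i) W₀ᴴ
        + ∑ i, ∑ j, tens4 (P i) (P j) (P i) (P j))
    (hY : Y = swap1234 * sigmaSigmaF dS dB σ) :
    ((ρS - ωS) * (ρS - ωS)).trace
      = (Y * tens4 U U U U * X * (tens4 U U U U)ᴴ).trace := by
  subst hX hY
  exact distance_to_equilibrium_as_fourfold_twirl_general σ P W₀ U ρS ωS hρS hωS
end

section
/- Let G be a finite group of order n, let D be a finite-dimensional complex representation of G with character χ_D, and let ρ : G → GL_m(ℂ) be a group homomorphism whose associated representation of G on ℂ^m is irreducible, with character χ_ρ(g) = Tr ρ(g). Let k = (1/n)·Σ_{g∈G} χ_D(g)·χ_ρ(g⁻¹) (the multiplicity of ρ in D). Then for all 1 ≤ i, j ≤ m, the vector U_{ij} ∈ ℂ^G with entries (U_{ij})_g = ρ(g⁻¹)_{ij} is an eigenvector of M^{χ_D} with eigenvalue n·k/m: for all g ∈ G, Σ_{h∈G} χ_D(g⁻¹h)·ρ(h⁻¹)_{ij}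 = (n·k/m)·ρ(g⁻¹)_{ij}. -/
/-!
For a class function `f` the operator `T = ∑ u, f u • ρ u⁻¹` commutes with every `ρ g`, so by
Schur's lemma it is a scalar on an irreducible `ρ`; taking traces, that scalar is
`(∑ u, f u * χ_ρ u⁻¹) / dim ρ`. The substitution `h = g * u` turns the convolution
`∑ h, f (g⁻¹ * h) • ρ h⁻¹` into `T * ρ g⁻¹`. For `f` the character of `D` the trace is `n * k`.
-/

open Matrix FDRep

/-- The representation of a group `G` on `ℂ^m` associated to `ρ : G →* GL_m(ℂ)` is
irreducible: `ℂ^m` is nonzero and its only `G`-invariant subspaces are `⊥` and `⊤`. -/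
def MatRep.Irreducible {G : Type} [Group G] {m : ℕ}
    (ρ : G →* Matrix.GeneralLinearGroup (Fin m) ℂ) : Prop :=
  0 < m ∧ ∀ p : Submodule ℂ (Fin m → ℂ),
    (∀ g : G, ∀ x ∈ p, ((ρ g : Matrix (Fin m) (Fin m) ℂ)).mulVec x ∈ p) → p = ⊥ ∨ p = ⊤

/-- A class function on `G`: a function constant on conjugacy classes. The quantifiers are ordered
as in `FDRep.char_conj`. -/
def IsClassFunction {G K : Type*} [Group G] (f : G → K) : Prop :=
  ∀ g h : G, f (h * g * h⁻¹) = f g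

section InvWeightedSum

variable {G K A : Type*} [Group G] [Fintype G]

/-- The weighted sum `∑ u, f u • ρ u⁻¹` of the values of `ρ : G →* A`; when `f` is a class function
and `ρ` an irreducible representation, this is the operator Schur's lemma is applied to. The
inverse matches the vectors `U_{ij}`, whose entries are those of `ρ g⁻¹`. -/
def invWeightedSum [Semiring A] [SMul K A] (f : G → K) (ρ : G →* A) : A :=
  ∑ u : G, f u • ρ u⁻¹

theorem sum_smul_map_inv_eq_invWeightedSum_mul [Semiring A] [SMul K A] [IsScalarTower K A A]
    (f : G → K) (ρ : G →* A) (g : G) :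
    ∑ h : G, f (g⁻¹ * h) • ρ h⁻¹ = invWeightedSum f ρ * ρ g⁻¹ := by
  rw [invWeightedSum, Finset.sum_mul, ← Equiv.sum_comp (Equiv.mulLeft g)]
  simp only [Equiv.coe_mulLeft, inv_mul_cancel_left, _root_.mul_inv_rev, map_mul, smul_mul_assoc]

theorem IsClassFunction.commute_invWeightedSum [Semiring A] [SMul K A] [IsScalarTower K A A]
    [SMulCommClass K A A] {f : G → K} (hf : IsClassFunction f) (ρ : G →* A) (g : G) :
    Commute (invWeightedSum f ρ) (ρ g) := by
  rw [commute_iff_eq, invWeightedSum, Finset.sum_mul, Finset.mul_sum,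
    ← Equiv.sum_comp (MulAut.conj g).toEquiv]
  refine Finset.sum_congr rfl fun u _ ↦ ?_
  have conj_inv_mul : (g * u * g⁻¹)⁻¹ * g = g * u⁻¹ := by group
  simp only [MulEquiv.toEquiv_eq_coe, EquivLike.coe_coe, MulAut.conj_apply, hf u g,
    smul_mul_assoc, mul_smul_comm, ← map_mul, conj_inv_mul]

end InvWeightedSum

section Schur

open Module Representation

variable {G K V : Type*} [Field K] [IsAlgClosed K] [AddCommGroup V] [Module K V]
  [FiniteDimensional K V]

theorem exists_eq_algebraMap_of_forall_commute [Monoid G] {ρ : Representation K G V}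
    [ρ.IsIrreducible] {T : End K V} (hT : ∀ g, Commute T (ρ g)) :
    ∃ c : K, T = algebraMap K (End K V) c := by
  obtain ⟨c, hc⟩ := (IsIrreducible.algebraMap_intertwiningMap_bijective_of_isAlgClosed
    (ρ := ρ)).surjective ⟨T, hT⟩
  exact ⟨c, (congrArg IntertwiningMap.toLinearMap hc).symm⟩

theorem finrank_smul_eq_trace_smul_one_of_forall_commute [Monoid G] {ρ : Representation K G V}
    [ρ.IsIrreducible] {T : End K V} (hT : ∀ g, Commute T (ρ g)) :
    (finrank K V : K) • T = LinearMap.trace K V T • (1 : End K V) := by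
  obtain ⟨c, rfl⟩ := exists_eq_algebraMap_of_forall_commute hT
  rw [Algebra.algebraMap_eq_smul_one, map_smul, LinearMap.trace_one, smul_smul, smul_eq_mul,
    mul_comm]

theorem IsClassFunction.finrank_smul_sum_smul_inv [Group G] [Fintype G] {f : G → K}
    (hf : IsClassFunction f) (ρ : Representation K G V) [ρ.IsIrreducible] (g : G) :
    (finrank K V : K) • ∑ h : G, f (g⁻¹ * h) • ρ h⁻¹ =
      (∑ u : G, f u * ρ.character u⁻¹) • ρ g⁻¹ := by
  have trace_eq : LinearMap.trace K V (invWeightedSum f ρ) = ∑ u : G, f u * ρ.character u⁻¹ := by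
    simp only [invWeightedSum, map_sum, map_smul, smul_eq_mul, Representation.character]
  rw [sum_smul_map_inv_eq_invWeightedSum_mul, ← smul_mul_assoc,
    finrank_smul_eq_trace_smul_one_of_forall_commute (hf.commute_invWeightedSum ρ), trace_eq,
    smul_one_mul]

end Schur

namespace MatRep

section ToRepresentation

variable {G R n : Type*} [Group G] [CommRing R] [Fintype n] [DecidableEq n]

/-- The representation of `G` on `n → R` by matrix-vector multiplication associated to a matrix
representation `ρ : G →* GL n R`. -/
def toRepresentation (ρ : G →* GL n R) : Representation R G (n → R) :=
  (toLinAlgEquiv' : Matrix n n R ≃ₐ[R] _).toMonoidHom.comp ((Units.coeHom _).comp ρ)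

theorem toRepresentation_apply (ρ : G →* GL n R) (g : G) :
    toRepresentation ρ g = toLin' (ρ g : Matrix n n R) := rfl

theorem character_toRepresentation {K : Type*} [Field K] (ρ : G →* GL n K) (g : G) :
    (toRepresentation ρ).character g = (ρ g : Matrix n n K).trace :=
  trace_toLin'_eq _

end ToRepresentation

theorem Irreducible.isIrreducible_toRepresentation {G : Type} [Group G] {m : ℕ}
    {ρ : G →* GL (Fin m) ℂ} (hρ : Irreducible ρ) : (toRepresentation ρ).IsIrreducible := by
  obtain ⟨m_pos, eq_bot_or_eq_top⟩ := hρ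
  have : Nonempty (Fin m) := ⟨⟨0, m_pos⟩⟩
  have : Nontrivial (Subrepresentation (toRepresentation ρ)) :=
    ⟨⊥, ⊤, fun h ↦ bot_ne_top (congrArg Subrepresentation.toSubmodule h)⟩
  refine ⟨fun σ ↦ ?_⟩
  refine (eq_bot_or_eq_top σ.toSubmodule fun g x hx ↦ σ.apply_mem_toSubmodule g hx).imp ?_ ?_ <;>
    exact fun h ↦ Subrepresentation.toSubmodule_injective h

end MatRep

theorem charMatrix_eigenvector_multiplicity_general {G K n : Type*} [Group G] [Fintype G] [Field K]
    [IsAlgClosed K] [Fintype n] [DecidableEq n] {f : G → K} (hf : IsClassFunction f)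
    (ρ : G →* GL n K) [(MatRep.toRepresentation ρ).IsIrreducible] (hn : (Fintype.card n : K) ≠ 0)
    (g : G) (i j : n) :
    ∑ h : G, f (g⁻¹ * h) * (ρ h⁻¹ : Matrix n n K) i j =
      (∑ u : G, f u * (ρ u⁻¹ : Matrix n n K).trace) / Fintype.card n *
        (ρ g⁻¹ : Matrix n n K) i j := by
  have matrix_eq : (Fintype.card n : K) • ∑ h : G, f (g⁻¹ * h) • (ρ h⁻¹ : Matrix n n K) =
      (∑ u : G, f u * (ρ u⁻¹ : Matrix n n K).trace) • (ρ g⁻¹ : Matrix n n K) :=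
    toLin'.injective <| by
      simpa only [map_smul, map_sum, MatRep.toRepresentation_apply,
        MatRep.character_toRepresentation, Module.finrank_fintype_fun_eq_card] using
        hf.finrank_smul_sum_smul_inv (MatRep.toRepresentation ρ) g
  rw [div_mul_eq_mul_div, eq_div_iff hn, mul_comm]
  simpa only [Matrix.smul_apply, Matrix.sum_apply, smul_eq_mul] using congrFun₂ matrix_eq i j

theorem charMatrix_eigenvector_multiplicity {G : Type} [Group G] [Fintype G] {m : ℕ}
    (D : FDRep ℂ G)
    (ρ : G →* Matrix.GeneralLinearGroup (Fin m) ℂ) (hρ : MatRep.Irreducible ρ)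
    (k : ℂ)
    (hk : k = (Fintype.card G : ℂ)⁻¹
        * ∑ g : G, D.character g * ((ρ (g⁻¹) : Matrix (Fin m) (Fin m) ℂ)).trace) :
    ∀ (g : G) (i j : Fin m),
      ∑ h : G, D.character (g⁻¹ * h) * (ρ (h⁻¹) : Matrix (Fin m) (Fin m) ℂ) i j
        = ((Fintype.card G : ℂ) * k / (m : ℂ)) * (ρ (g⁻¹) : Matrix (Fin m) (Fin m) ℂ) i j := by
  intro g i j
  have := hρ.isIrreducible_toRepresentation
  have hm : (Fintype.card (Fin m) : ℂ) ≠ 0 := by simpa using hρ.1.ne'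
  rw [hk, mul_inv_cancel_left₀ (by simp)]
  simpa only [Fintype.card_fin] using
    charMatrix_eigenvector_multiplicity_general (f := D.character) D.char_conj ρ hm g i j
end

section
/- Let G be a finite group of order n and let D be a finite-dimensional complex representation of G with character χ_D. Then the matrix M^{χ_D} is invertible if and only if for every finite-dimensional irreducible complex representation W of G with character χ_W, the multiplicity (1/n)·Σ_{g∈G} χ_D(g)·χ_W(g⁻¹) is nonzero. -/
open FDRep CategoryTheory

/-- For a representation with character `χ`, the matrix `M^χ` indexed by the group elements,
with entries `(M^χ)_{g,h} = χ(g⁻¹ h)`. -/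
noncomputable def charMatrix {G : Type} [Group G] [Fintype G] (V : FDRep ℂ G) : Matrix G G ℂ :=
  Matrix.of fun g h => V.character (g⁻¹ * h)

/-!
Identify column vectors with elements of the group algebra `k[G]`. Then `a` lies in the kernel of
`M^χ` iff `tr ρ(b a) = 0` for all `b`. As `k[G]` is semisimple, the left ideal generated by `a` is
generated by an idempotent `e`, and in characteristic zero the trace of `ρ(e)` is its rank, so the
condition forces `ρ(e) = 0` and hence `ρ(a) = 0`. Therefore `M^χ` is invertible iff the
`k[G]`-module `D` is faithful. Since `k[G]` is a sum of simple left ideals, this holds iff every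
simple module embeds in `D`, that is, has nonzero multiplicity in `D`.
-/

section SemisimpleRing

variable {R M : Type*} [Ring R] [AddCommGroup M] [Module R M]

theorem exists_linearMap_ne_zero_of_faithfulSMul (N : Type*) [AddCommGroup N] [Module R N]
    [Module.Projective R N] [Nontrivial N] [FaithfulSMul R M] : ∃ f : N →ₗ[R] M, f ≠ 0 := by
  obtain ⟨n, hn⟩ := exists_ne (0 : N)
  obtain ⟨ℓ, hℓ⟩ := Module.Projective.exists_dual_ne_zero R hn
  obtain ⟨m, hm⟩ : ∃ m : M, ℓ n • m ≠ 0 := by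
    by_contra! h
    exact hℓ (eq_of_smul_eq_smul fun m => (h m).trans (zero_smul R m).symm)
  exact ⟨ℓ.smulRight m, fun h => hm (LinearMap.congr_fun h n)⟩

theorem faithfulSMul_of_forall_simple_exists_linearMap_ne_zero [IsSemisimpleRing R]
    (h : ∀ I : Ideal R, IsSimpleModule R I → ∃ f : I →ₗ[R] M, f ≠ 0) : FaithfulSMul R M := by
  have annihilator_le (I : Ideal R) (hI : IsSimpleModule R I) :
      Module.annihilator R M ≤ Submodule.annihilator I := by
    obtain ⟨f, hf⟩ := h I hI
    exact f.annihilator_le_of_injective (LinearMap.injective_of_ne_zero hf)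
  rw [← Module.annihilator_eq_bot, eq_bot_iff]
  calc Module.annihilator R M
      ≤ (sSup {I : Ideal R | IsSimpleModule R I}).annihilator := by
        rw [sSup_eq_iSup', Submodule.annihilator_iSup]
        exact le_iInf fun I => annihilator_le I I.2
    _ = ⊥ := by
        rw [IsSemisimpleModule.sSup_simples_eq_top, Submodule.annihilator_top,
          Module.annihilator_eq_bot]
        infer_instance

theorem map_eq_zero_iff_forall_trace_map_mul_eq_zero [IsSemisimpleRing R] {k V : Type*} [Field k]
    [CharZero k] [AddCommGroup V] [Module k V] [FiniteDimensional k V] (φ : R →+* Module.End k V)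
    (a : R) : φ a = 0 ↔ ∀ b, LinearMap.trace k V (φ (b * a)) = 0 := by
  refine ⟨fun ha b => by rw [map_mul, ha, mul_zero, map_zero], fun h => ?_⟩
  obtain ⟨e, he, span_eq⟩ := IsSemisimpleRing.ideal_eq_span_idempotent (Ideal.span {a})
  obtain ⟨b, hb⟩ := Ideal.mem_span_singleton'.1 (span_eq ▸ Ideal.mem_span_singleton_self e)
  obtain ⟨c, hc⟩ := Ideal.mem_span_singleton'.1 (span_eq ▸ Ideal.mem_span_singleton_self a)
  have map_e : φ e = 0 :=
    LinearMap.IsIdempotentElem.eq_zero_of_trace_eq_zero (he.map φ) (hb ▸ h b)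
  rw [← hc, map_mul, map_e, mul_zero]

end SemisimpleRing

section CharacterMatrix

open Representation
open scoped MonoidAlgebra

variable {k G V : Type*} [Field k] [Group G] [AddCommGroup V] [Module k V]
  (ρ : Representation k G V)

/-- The matrix `M^χ` of the character `χ` of a representation over an arbitrary field;
`charMatrix` is the case of complex representations bundled as objects of `FDRep ℂ G`. -/
noncomputable def characterMatrix : Matrix G G k :=
  Matrix.of fun g h => ρ.character (g⁻¹ * h)

theorem characterMatrix_mulVec_coeff [Fintype G] (a : k[G]) (g : G) :
    (characterMatrix ρ).mulVec a.coeff g =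
      LinearMap.trace k V (ρ.asAlgebraHom (MonoidAlgebra.single g⁻¹ 1 * a)) := by
  induction a using MonoidAlgebra.induction_linear with
  | zero => simp
  | add a b ha hb =>
    rw [mul_add, map_add, map_add, ← ha, ← hb, MonoidAlgebra.coeff_add, Finsupp.coe_add,
      Matrix.mulVec_add, Pi.add_apply]
  | single h r =>
    classical
    simp [characterMatrix, Representation.character, Matrix.mulVec, dotProduct,
      MonoidAlgebra.single_mul_single, Finsupp.single_apply, mul_comm r]

theorem characterMatrix_mulVec_coeff_eq_zero_iff [Fintype G] [CharZero k] [FiniteDimensional k V]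
    (a : k[G]) : (characterMatrix ρ).mulVec a.coeff = 0 ↔ ρ.asAlgebraHom a = 0 := by
  have trace_eq_zero_iff : (∀ g, LinearMap.trace k V
      (ρ.asAlgebraHom (MonoidAlgebra.single g⁻¹ 1 * a)) = 0) ↔
        ∀ b, LinearMap.trace k V (ρ.asAlgebraHom (b * a)) = 0 := by
    refine ⟨fun h b => ?_, fun h g => h _⟩
    induction b using MonoidAlgebra.induction_linear with
    | zero => rw [zero_mul, map_zero, map_zero]
    | add b c hb hc => rw [add_mul, map_add, map_add, hb, hc, add_zero]
    | single g r =>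
      have single_eq : MonoidAlgebra.single g r = r • (MonoidAlgebra.single g⁻¹⁻¹ 1 : k[G]) := by
        simp
      rw [single_eq, smul_mul_assoc, map_smul, map_smul, h, smul_zero]
  simp_rw [funext_iff, characterMatrix_mulVec_coeff, Pi.zero_apply, trace_eq_zero_iff]
  exact (map_eq_zero_iff_forall_trace_map_mul_eq_zero ρ.asAlgebraHom.toRingHom a).symm

theorem faithfulSMul_asModule_iff_injective :
    FaithfulSMul k[G] ρ.asModule ↔ Function.Injective ρ.asAlgebraHom :=
  ⟨fun _ _ _ h => eq_of_smul_eq_smul fun x : ρ.asModule =>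
      LinearMap.congr_fun h (ρ.asModuleEquiv x),
    fun h => ⟨fun hab => h (LinearMap.ext hab)⟩⟩

theorem isUnit_det_characterMatrix_iff_faithfulSMul [Fintype G] [DecidableEq G] [CharZero k]
    [FiniteDimensional k V] :
    IsUnit (characterMatrix ρ).det ↔ FaithfulSMul k[G] ρ.asModule := by
  have coeff_surjective : Function.Surjective fun a : k[G] => (a.coeff : G → k) :=
    Finsupp.equivFunOnFinite.surjective.comp MonoidAlgebra.coeffEquiv.surjective
  calc IsUnit (characterMatrix ρ).det
      ↔ ∀ v, (characterMatrix ρ).mulVec v = 0 → v = 0 := by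
        rw [← Matrix.isUnit_iff_isUnit_det, ← Matrix.mulVec_injective_iff_isUnit]
        exact injective_iff_map_eq_zero (characterMatrix ρ).mulVecLin
    _ ↔ ∀ a, ρ.asAlgebraHom a = 0 → a = 0 := by
        simp only [coeff_surjective.forall, characterMatrix_mulVec_coeff_eq_zero_iff,
          Finsupp.coe_eq_zero, MonoidAlgebra.coeff_eq_zero]
    _ ↔ FaithfulSMul k[G] ρ.asModule := by
        rw [faithfulSMul_asModule_iff_injective, injective_iff_map_eq_zero]

theorem card_inv_mul_sum_char_mul_char_ne_zero_iff {W : Type*} [AddCommGroup W] [Module k W]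
    (σ : Representation k G W) [Fintype G] [CharZero k] [FiniteDimensional k V]
    [FiniteDimensional k W] :
    (Fintype.card G : k)⁻¹ * ∑ g : G, ρ.character g * σ.character g⁻¹ ≠ 0 ↔
      ∃ f : σ.asModule →ₗ[k[G]] ρ.asModule, f ≠ 0 := by
  have : Invertible (Nat.card G : k) := invertibleOfNonzero (NeZero.ne _)
  rw [Fintype.card_eq_nat_card, card_inv_mul_sum_char_mul_char_eq_finrank, Nat.cast_ne_zero,
    ← Nat.pos_iff_ne_zero, Module.finrank_pos_iff_exists_ne_zero]
  simp [(IntertwiningMap.equivLinearMapAsModule σ ρ).symm.surjective.exists]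

end CharacterMatrix

section FDRep

open Representation
open scoped MonoidAlgebra

universe u v

variable {k : Type u} [Field k] {G : Type v}

theorem simple_fdRep_of_isSimpleModule_asModule [Group G] (W : FDRep k G)
    [hW : IsSimpleModule k[G] (asModule W.ρ)] : Simple W := by
  let F := forget₂ (FDRep k G) (Rep.{u} k G)
  have : Simple (Rep.equivalenceModuleMonoidAlgebra.functor.obj (F.obj W)) :=
    (simple_iff_isSimpleModule' _).2 hW
  have : Simple (F.obj W) := (simple_obj_iff Rep.equivalenceModuleMonoidAlgebra.functor _).1 this
  exact F.simple_of_simple_obj W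

theorem nontrivial_fdRep_of_simple [Monoid G] (W : FDRep k G) [Simple W] : Nontrivial W := by
  by_contra h
  rw [not_nontrivial_iff_subsingleton] at h
  refine id_nonzero W ?_
  ext x
  exact Subsingleton.elim _ _

theorem exists_fdRep_asModule_linearEquiv [Monoid G] (S : Type*) [AddCommGroup S] [Module k S]
    [Module k[G] S] [IsScalarTower k k[G] S] [FiniteDimensional k S] :
    ∃ W : FDRep k G, Nonempty (asModule W.ρ ≃ₗ[k[G]] S) := by
  -- The carrier of an `FDRep k G` lives in the universe of `k`, which need not be that of `S`.
  let e : (Fin (Module.finrank k S) → k) ≃ₗ[k] S := (Module.finBasis k S).equivFun.symm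
  let φ : k[G] →ₐ[k] Module.End k (Fin (Module.finrank k S) → k) :=
    (e.symm.conjAlgEquiv k : Module.End k S →ₐ[k] _).comp (Algebra.lsmul k k S)
  let ρ : Representation k G (Fin (Module.finrank k S) → k) := (MonoidAlgebra.lift k _ G).symm φ
  have asAlgebraHom_eq : ρ.asAlgebraHom = φ := (MonoidAlgebra.lift k _ G).apply_symm_apply φ
  have e_smul (a : k[G]) (x : ρ.asModule) :
      e (ρ.asModuleEquiv (a • x)) = a • e (ρ.asModuleEquiv x) := by
    rw [asModuleEquiv_map_smul, asAlgebraHom_eq]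
    exact e.apply_symm_apply _
  exact ⟨FDRep.of ρ, ⟨{ (ρ.asModuleEquiv.trans e) with map_smul' := e_smul }⟩⟩

theorem charMatrix_invertible_iff_general [CharZero k] [Group G] [Fintype G] [DecidableEq G]
    (D : FDRep k G) :
    IsUnit (characterMatrix D.ρ).det ↔
      ∀ W : FDRep k G, Simple W →
        (Fintype.card G : k)⁻¹ * ∑ g : G, D.character g * W.character (g⁻¹) ≠ 0 := by
  refine (isUnit_det_characterMatrix_iff_faithfulSMul D.ρ).trans ⟨fun _ W _ => ?_, fun h => ?_⟩
  · have : Nontrivial (asModule W.ρ) := nontrivial_fdRep_of_simple W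
    have : Module.Projective k[G] (asModule W.ρ) := Module.projective_of_isSemisimpleRing _ _
    exact (card_inv_mul_sum_char_mul_char_ne_zero_iff D.ρ W.ρ).2
      (exists_linearMap_ne_zero_of_faithfulSMul _)
  · refine faithfulSMul_of_forall_simple_exists_linearMap_ne_zero fun I _ => ?_
    obtain ⟨W, ⟨e⟩⟩ := exists_fdRep_asModule_linearEquiv (k := k) (G := G) I
    have : IsSimpleModule k[G] (asModule W.ρ) := .congr e
    obtain ⟨f, hf⟩ := (card_inv_mul_sum_char_mul_char_ne_zero_iff D.ρ W.ρ).1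
      (h W (simple_fdRep_of_isSimpleModule_asModule W))
    exact ⟨f ∘ₗ e.symm, mt (LinearEquiv.comp_toLinearMap_symm_eq 0 f).1 (by simpa using hf)⟩

end FDRep

theorem charMatrix_invertible_iff {G : Type} [Group G] [Fintype G] [DecidableEq G]
    (D : FDRep ℂ G) :
    IsUnit (charMatrix D).det ↔
      ∀ W : FDRep ℂ G, Simple W →
        (Fintype.card G : ℂ)⁻¹ * ∑ g : G, D.character g * W.character (g⁻¹) ≠ 0 := by
  exact charMatrix_invertible_iff_general D
end

section
/- Let G be a finite group of order n, let D be a finite-dimensional complex representation of G with character χ_D, and let V₁,…,V_r be pairwise non-isomorphic finite-dimensional irreducible complex representations of G, with characters χ₁,…,χ_r and dimensions d₁,…,d_r, such that every finite-dimensional irreducible complex representation of G is isomorphic to some V_i. Let k_i = (1/n)·Σ_{g∈G} χ_D(g)·χ_i(g⁻¹) be the multiplicity of V_i in D. Then det M^{χ_D} = ∏_{i=1}^r (k_i·n/d_i)^{d_i²}. -/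
open FDRep CategoryTheory

/-!
Let `k` be algebraically closed of characteristic not dividing `|G|`. For a class function `f`, the
matrix `(f (g⁻¹ h))` is the matrix of left multiplication by the central element `∑ f(g⁻¹) g` of
`k[G]`, so its determinant is the norm of that element. The action of `k[G]` on the irreducible
representations `V i` identifies `k[G]` with `∏ End_k (V i)`: it is injective because every minimal
left ideal is one of the `V i` and `k[G]` is the sum of these ideals, and surjective by the Jacobson
density theorem, since by Schur's lemma every endomorphism of `⨁ V i` is a scalar on each `V i`. The
central element acts on `V i` by the scalar `(∑ f(g) χᵢ(g⁻¹)) / dᵢ`, hence by the same scalar on the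
`dᵢ ^ 2`-dimensional algebra `End_k (V i)`.
-/

open Module
open scoped MonoidAlgebra

universe u

theorem det_piMap_smul_id {R ι : Type*} [CommRing R] [Nontrivial R] [Fintype ι]
    (M : ι → Type*) [∀ i, AddCommGroup (M i)] [∀ i, Module R (M i)] [∀ i, Module.Free R (M i)]
    [∀ i, Module.Finite R (M i)] (c : ι → R) :
    LinearMap.det (LinearMap.piMap fun i ↦ c i • (LinearMap.id : M i →ₗ[R] M i)) =
      ∏ i, c i ^ finrank R (M i) := by
  classical
  let b := Pi.basis fun i ↦ Free.chooseBasis R (M i)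
  have hb : LinearMap.toMatrix b b (LinearMap.piMap fun i ↦ c i • LinearMap.id) =
      Matrix.diagonal fun s ↦ c s.1 := by
    ext ⟨i, s⟩ ⟨j, t⟩
    obtain rfl | hij := eq_or_ne i j
    · simp [b, LinearMap.toMatrix_apply, Matrix.diagonal_apply, Finsupp.single_apply, eq_comm]
    · simp [b, LinearMap.toMatrix_apply, hij]
  rw [← LinearMap.det_toMatrix b, hb, Matrix.det_diagonal, Fintype.prod_sigma]
  simp [finrank_eq_card_chooseBasisIndex]

theorem isSimpleModule_of_finrank_end_eq_one {k A : Type*} (M : Type*) [Field k] [Ring A]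
    [Algebra k A] [AddCommGroup M] [Module k M] [Module A M] [IsScalarTower k A M]
    [IsSemisimpleModule A M] (h : finrank k (End A M) = 1) :
    IsSimpleModule A M := by
  have : Nontrivial (End A M) := nontrivial_of_finrank_eq_succ h
  have : Nontrivial M := by
    by_contra hM
    rw [not_nontrivial_iff_subsingleton] at hM
    exact not_subsingleton (End A M) inferInstance
  refine (isSimpleModule_iff A M).mpr { eq_bot_or_eq_top := fun N ↦ ?_ }
  obtain ⟨N', hN⟩ := exists_isCompl N
  obtain ⟨c, hc⟩ := (finrank_eq_one_iff_of_nonzero' (1 : End A M) one_ne_zero).mp h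
    (N.projection N' hN)
  rw [← Submodule.range_projection hN, ← hc]
  obtain rfl | hc0 := eq_or_ne c 0
  · simp
  · exact .inr (LinearMap.range_eq_top.mpr fun m ↦ ⟨c⁻¹ • m, by simp [hc0]⟩)

section ProductAction

variable {k A ι : Type*} [CommRing k] [Ring A] [Algebra k A]
  (M : ι → Type*) [∀ i, AddCommGroup (M i)] [∀ i, Module k (M i)] [∀ i, Module A (M i)]
  [∀ i, IsScalarTower k A (M i)]

variable (k A) in
/-- The action of an algebra on a family of modules, as a homomorphism to the product of their
`k`-endomorphism algebras. For the simple modules over a group algebra this is the Wedderburn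
decomposition. -/
def piLsmul : A →ₐ[k] Π i, End k (M i) :=
  AlgHom.pi fun i ↦ Algebra.lsmul k k (M i)

@[simp]
theorem piLsmul_apply (a : A) (i : ι) (m : M i) : piLsmul k A M a i m = a • m := rfl

theorem piLsmul_injective [IsSemisimpleRing A]
    (hM : ∀ I : Submodule A A, IsSimpleModule A I → ∃ i, Nonempty (I ≃ₗ[A] M i)) :
    Function.Injective (piLsmul k A M) := by
  rw [injective_iff_map_eq_zero]
  intro a ha
  suffices a ∈ (⊤ : Submodule A A).annihilator by
    simpa using Submodule.mem_annihilator.mp this 1 trivial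
  rw [← IsSemisimpleModule.sSup_simples_eq_top, sSup_eq_iSup', Submodule.annihilator_iSup,
    Submodule.mem_iInf]
  rintro ⟨I, hI⟩
  obtain ⟨i, ⟨e⟩⟩ := hM I hI
  change a ∈ Module.annihilator A I
  rw [e.annihilator_eq, Module.mem_annihilator]
  exact fun m ↦ congr($ha i m)

theorem norm_eq_prod_pow_finrank_sq [Nontrivial k] [Fintype ι] [∀ i, Module.Free k (M i)]
    [∀ i, Module.Finite k (M i)] (h : Function.Bijective (piLsmul k A M)) {a : A} {c : ι → k}
    (ha : ∀ i (m : M i), a • m = c i • m) :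
    Algebra.norm k a = ∏ i, c i ^ finrank k (M i) ^ 2 := by
  let e := LinearEquiv.ofBijective (piLsmul k A M).toLinearMap h
  have he : e ∘ₗ Algebra.lmul k A a ∘ₗ e.symm =
      LinearMap.piMap fun i ↦ c i • (LinearMap.id : End k (M i) →ₗ[k] End k (M i)) := by
    refine LinearMap.ext fun T ↦ ?_
    obtain ⟨b, rfl⟩ := e.surjective T
    rw [LinearMap.comp_apply, LinearMap.comp_apply, LinearEquiv.coe_coe, LinearEquiv.coe_coe,
      e.symm_apply_apply]
    ext i m
    change (a * b) • m = c i • b • m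
    rw [mul_smul, ha]
  rw [Algebra.norm_apply, ← LinearMap.det_conj _ e, he, det_piMap_smul_id]
  simp_rw [finrank_linearMap, sq]

end ProductAction

section Density

variable {k A ι : Type*} [Field k] [IsAlgClosed k] [Ring A] [Algebra k A] [Finite ι]
  {M : ι → Type*} [∀ i, AddCommGroup (M i)] [∀ i, Module k (M i)] [∀ i, Module A (M i)]
  [∀ i, IsScalarTower k A (M i)] [∀ i, FiniteDimensional k (M i)] [∀ i, IsSimpleModule A (M i)]
  (hM : Pairwise fun i j ↦ ¬ Nonempty (M i ≃ₗ[A] M j))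
include hM

theorem exists_end_pi_apply_eq_smul (φ : End A (Π i, M i)) :
    ∃ c : ι → k, ∀ m i, φ m i = c i • m i := by
  classical
  cases nonempty_fintype ι
  have hdiag (i : ι) : ∃ c : k, ∀ x : M i, φ (Pi.single i x) i = c • x := by
    obtain ⟨c, hc⟩ := (IsSimpleModule.algebraMap_end_bijective_of_isAlgClosed k).2
      (LinearMap.proj i ∘ₗ φ ∘ₗ LinearMap.single A M i)
    exact ⟨c, fun x ↦ congr($hc x).symm⟩
  have hoff {i j : ι} (hji : j ≠ i) (x : M j) : φ (Pi.single j x) i = 0 := by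
    let ψ := LinearMap.proj i ∘ₗ φ ∘ₗ LinearMap.single A M j
    have hψ : ψ = 0 := ψ.bijective_or_eq_zero.resolve_left fun hbij ↦
      hM hji ⟨.ofBijective ψ hbij⟩
    exact congr($hψ x)
  choose c hc using hdiag
  refine ⟨c, fun m i ↦ ?_⟩
  calc φ m i = ∑ j, φ (Pi.single j (m j)) i := by
        rw [← Finset.sum_apply, ← map_sum, Finset.univ_sum_single]
    _ = φ (Pi.single i (m i)) i := Finset.sum_eq_single i (fun j _ hj ↦ hoff hj _) (by simp)
    _ = c i • m i := hc i _

theorem piLsmul_surjective : Function.Surjective (piLsmul k A M) := by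
  classical
  intro T
  let T' : End (End A (Π i, M i)) (Π i, M i) :=
    { toFun m i := T i (m i)
      map_add' _ _ := by ext; simp
      map_smul' φ m := by
        obtain ⟨c, hc⟩ := exists_end_pi_apply_eq_smul (k := k) hM φ
        ext i
        simp [hc] }
  have : Module.Finite (End A (Π i, M i)) (Π i, M i) := .of_restrictScalars_finite k _ _
  obtain ⟨a, ha⟩ := Module.Finite.toModuleEnd_moduleEnd_surjective (R := A) T'
  refine ⟨a, funext fun i ↦ LinearMap.ext fun x ↦ ?_⟩
  simpa [T'] using congr($ha (Pi.single i x) i)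

end Density

section GroupAlgebraElement

variable {k G : Type*} [Group G] [Fintype G]

/-- The element `∑ f(g⁻¹) g` of the group algebra. The inverse makes left multiplication by it have
matrix entries `f (h * g⁻¹)`. -/
noncomputable def sumSingleInv [Semiring k] (f : G → k) : k[G] :=
  ∑ g, MonoidAlgebra.single g (f g⁻¹)

@[simp]
theorem coeff_sumSingleInv [Semiring k] (f : G → k) (g : G) :
    (sumSingleInv f).coeff g = f g⁻¹ := by
  classical
  simp [sumSingleInv, MonoidAlgebra.coeff_single, Finsupp.single_apply]

theorem leftMulMatrix_sumSingleInv [CommRing k] [DecidableEq G] (f : G → k) :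
    Algebra.leftMulMatrix (MonoidAlgebra.basis G k) (sumSingleInv f) =
      Matrix.of fun g h ↦ f (h * g⁻¹) := by
  ext g h
  rw [Algebra.leftMulMatrix_eq_repr_mul]
  change (sumSingleInv f * MonoidAlgebra.single h 1).coeff g = _
  simp [MonoidAlgebra.coeff_mul_single_apply]

theorem sumSingleInv_mem_center [CommSemiring k] {f : G → k}
    (hf : ∀ g h, f (h * g * h⁻¹) = f g) : sumSingleInv f ∈ Submonoid.center k[G] := by
  rw [Submonoid.mem_center_iff]
  intro a
  induction a using MonoidAlgebra.induction_linear with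
  | zero => simp
  | add a b ha hb => rw [add_mul, mul_add, ha, hb]
  | single h c =>
    ext g
    have hconj : f (g⁻¹ * h) = f (h * g⁻¹) := by simpa [mul_assoc] using (hf (g⁻¹ * h) h).symm
    simp [MonoidAlgebra.coeff_single_mul_apply, MonoidAlgebra.coeff_mul_single_apply, hconj,
      mul_comm]

theorem trace_asAlgebraHom_sumSingleInv [Field k] {V : Type*} [AddCommGroup V] [Module k V]
    (ρ : Representation k G V) (f : G → k) :
    LinearMap.trace k V (ρ.asAlgebraHom (sumSingleInv f)) = ∑ g, f g * ρ.character g⁻¹ := by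
  rw [sumSingleInv, map_sum, map_sum, ← Equiv.sum_comp (Equiv.inv G)]
  simp [Representation.character, Representation.asAlgebraHom_single]

end GroupAlgebraElement

section Irreducible

variable {k G V : Type*} [Field k] [IsAlgClosed k] [Group G] [AddCommGroup V] [Module k V]
  [FiniteDimensional k V] (ρ : Representation k G V) [ρ.IsIrreducible]

theorem finrank_smul_asAlgebraHom_of_mem_center {z : k[G]} (hz : z ∈ Submonoid.center k[G]) :
    (finrank k V : k) • ρ.asAlgebraHom z = LinearMap.trace k V (ρ.asAlgebraHom z) • 1 := by
  obtain ⟨c, hc⟩ :=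
    (Representation.IsIrreducible.algebraMap_intertwiningMap_bijective_of_isAlgClosed (ρ := ρ)).2
      (.centralAlgebraMul ρ hz)
  have hscalar : ρ.asAlgebraHom z = c • 1 := congr($(hc).toLinearMap).symm
  simp [hscalar, smul_smul, mul_comm]

variable [NeZero (Nat.card G : k)]

/- If `dim V = 0` in `k`, then every central element acts with trace zero. For the element built
from the character of `V` this trace is `∑ χ(g) χ(g⁻¹)`, contradicting orthonormality. -/
include ρ in
theorem finrank_cast_ne_zero_of_isIrreducible [Finite G] : (finrank k V : k) ≠ 0 := by
  cases nonempty_fintype G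
  intro hdim
  have : Nontrivial V := IsSimpleModule.nontrivial k[G] ρ.asModule
  have : Invertible (Nat.card G : k) := invertibleOfNonzero (NeZero.ne _)
  have hsum : ∑ g, ρ.character g * ρ.character g⁻¹ = 0 := by
    have h := finrank_smul_asAlgebraHom_of_mem_center ρ (sumSingleInv_mem_center ρ.char_conj)
    rwa [hdim, zero_smul, trace_asAlgebraHom_sumSingleInv, eq_comm,
      smul_eq_zero_iff_left one_ne_zero] at h
  have horth := Representation.char_orthonormal ρ ρ
  rw [hsum, mul_zero, if_pos ⟨.refl ρ⟩] at horth
  exact zero_ne_one horth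

theorem asAlgebraHom_sumSingleInv [Fintype G] {f : G → k}
    (hf : ∀ g h, f (h * g * h⁻¹) = f g) :
    ρ.asAlgebraHom (sumSingleInv f) =
      ((∑ g, f g * ρ.character g⁻¹) / finrank k V) • 1 := by
  rw [div_eq_inv_mul, mul_smul, eq_inv_smul_iff₀ (finrank_cast_ne_zero_of_isIrreducible ρ),
    ← trace_asAlgebraHom_sumSingleInv,
    finrank_smul_asAlgebraHom_of_mem_center ρ (sumSingleInv_mem_center hf)]

end Irreducible

section AsModule

variable {k G : Type*} [CommSemiring k] [Monoid G]

theorem nonempty_asModule_linearEquiv_iff {V W : Type*} [AddCommMonoid V] [Module k V]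
    [AddCommMonoid W] [Module k W] {ρ : Representation k G V} {σ : Representation k G W} :
    Nonempty (ρ.asModule ≃ₗ[k[G]] σ.asModule) ↔ Nonempty (ρ.Equiv σ) := by
  let Φ := Representation.IntertwiningMap.equivLinearMapAsModule ρ σ
  constructor
  · rintro ⟨e⟩
    exact ⟨(Φ.symm e).ofBijective e.bijective⟩
  · rintro ⟨e⟩
    exact ⟨.ofBijective (Φ e.toIntertwiningMap) e.toLinearEquiv.bijective⟩

/-- Turning a `k[G]`-module into a representation and back gives the same module. This is the
counterpart for `Representation.ofModule'` of `Rep.counitIso`. -/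
noncomputable def ofModule'AsModuleEquiv (M : Type*) [AddCommMonoid M] [Module k M]
    [Module k[G] M] [IsScalarTower k k[G] M] :
    (Representation.ofModule' (k := k) (G := G) M).asModule ≃ₗ[k[G]] M where
  __ := (Representation.ofModule' M).asModuleEquiv
  map_smul' a m := by
    have : (Representation.ofModule' M).asAlgebraHom = Algebra.lsmul k (A := k[G]) k M :=
      (MonoidAlgebra.lift k _ G).apply_symm_apply _
    exact congr($this a m)

end AsModule

section CompleteFamily

variable {k G ι : Type*} [Field k] [IsAlgClosed k] [Group G] [NeZero (Nat.card G : k)]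
  {V : ι → Type*} [∀ i, AddCommGroup (V i)] [∀ i, Module k (V i)]
  [∀ i, FiniteDimensional k (V i)] (ρ : ∀ i, Representation k G (V i))
  [∀ i, (ρ i).IsIrreducible]
  (hpairwise : Pairwise fun i j ↦ ¬ Nonempty ((ρ i).Equiv (ρ j)))
  (hcomplete : ∀ I : Submodule k[G] k[G], IsSimpleModule k[G] I →
    ∃ i, Nonempty ((Representation.ofModule' (k := k) (G := G) I).Equiv (ρ i)))
include hpairwise hcomplete

theorem piLsmul_asModule_bijective [Finite G] [Finite ι] :
    Function.Bijective (piLsmul k k[G] fun i ↦ (ρ i).asModule) := by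
  constructor
  · refine piLsmul_injective _ fun I hI ↦ ?_
    obtain ⟨i, hi⟩ := hcomplete I hI
    obtain ⟨e⟩ := nonempty_asModule_linearEquiv_iff.mpr hi
    exact ⟨i, ⟨(ofModule'AsModuleEquiv I).symm ≪≫ₗ e⟩⟩
  · exact piLsmul_surjective fun i j hij ↦
      mt nonempty_asModule_linearEquiv_iff.mp (hpairwise hij)

theorem det_inv_mul_eq_prod_of_isIrreducible [Fintype G] [DecidableEq G] [Fintype ι]
    {f : G → k} (hf : ∀ g h, f (h * g * h⁻¹) = f g) :
    (Matrix.of fun g h ↦ f (g⁻¹ * h)).det =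
      ∏ i, ((∑ g, f g * (ρ i).character g⁻¹) / finrank k (V i)) ^ finrank k (V i) ^ 2 := by
  have hscalar (i) (v : (ρ i).asModule) :
      sumSingleInv f • v = ((∑ g, f g * (ρ i).character g⁻¹) / finrank k (V i)) • v :=
    congr($(asAlgebraHom_sumSingleInv (ρ i) hf) v)
  have hcomm (g h : G) : f (g⁻¹ * h) = f (h * g⁻¹) := by
    simpa [mul_assoc] using (hf (g⁻¹ * h) g).symm
  simp_rw [hcomm, ← leftMulMatrix_sumSingleInv, ← Algebra.norm_eq_matrix_det]
  exact norm_eq_prod_pow_finrank_sq _ (piLsmul_asModule_bijective ρ hpairwise hcomplete) hscalar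

end CompleteFamily

section FDRep

theorem nonempty_equiv_iff_nonempty_iso {k : Type u} {G : Type*} [Field k] [Group G]
    (V W : FDRep k G) :
    Nonempty (Representation.Equiv (A := k) V.ρ W.ρ) ↔ Nonempty (V ≅ W) := by
  let F := forget₂ (FDRep k G) (Rep k G)
  constructor
  · rintro ⟨e⟩
    exact ⟨F.preimageIso (Rep.mkIso e)⟩
  · rintro ⟨e⟩
    exact ⟨Representation.equivOfIso (F.mapIso e)⟩

variable {k G : Type u} [Field k] [IsAlgClosed k] [Group G]

theorem simple_iff_isIrreducible [Finite G] [NeZero (Nat.card G : k)] (V : FDRep k G) :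
    Simple V ↔ Representation.IsIrreducible (k := k) V.ρ := by
  rw [simple_iff_end_is_rank_one,
    ← (Representation.linHom.invariantsEquivFDRepHom V V).finrank_eq,
    (Representation.invariantsEquivIntertwiningMap _ _).finrank_eq]
  refine ⟨fun h ↦ ?_, fun _ ↦ Representation.IsIrreducible.finrank_intertwiningMap_self _⟩
  rw [Representation.irreducible_iff_isSimpleModule_asModule]
  apply isSimpleModule_of_finrank_end_eq_one (k := k)
  rw [← h, (Representation.IntertwiningMap.equivLinearMapAsModule _ _).finrank_eq]

theorem det_charMatrix_general [Fintype G] [DecidableEq G] [NeZero (Nat.card G : k)]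
    {ι : Type*} [Fintype ι] (V : ι → FDRep k G) (hsimple : ∀ i, Simple (V i))
    (hpairwise : Pairwise fun i j ↦ ¬ Nonempty (V i ≅ V j))
    (hcomplete : ∀ W : FDRep k G, Simple W → ∃ i, Nonempty (W ≅ V i))
    (f : G → k) (hf : ∀ g h, f (h * g * h⁻¹) = f g) :
    (Matrix.of fun g h ↦ f (g⁻¹ * h)).det =
      ∏ i, ((∑ g, f g * (V i).character g⁻¹) / finrank k (V i)) ^ finrank k (V i) ^ 2 := by
  have (i : ι) : Representation.IsIrreducible (k := k) (V i).ρ :=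
    (simple_iff_isIrreducible _).mp (hsimple i)
  refine det_inv_mul_eq_prod_of_isIrreducible (fun i ↦ (V i).ρ)
    (fun i j hij ↦ mt (nonempty_equiv_iff_nonempty_iso _ _).mp (hpairwise hij))
    (fun I hI ↦ ?_) hf
  have : Module.Finite k I := .of_injective (I.subtype.restrictScalars k) I.injective_subtype
  let W := FDRep.of (Representation.ofModule' (k := k) (G := G) I)
  have hW : Simple W := (simple_iff_isIrreducible W).mpr <|
    (Representation.irreducible_iff_isSimpleModule_asModule _).mpr <|
      .congr (ofModule'AsModuleEquiv I)
  obtain ⟨i, hi⟩ := hcomplete W hW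
  exact ⟨i, (nonempty_equiv_iff_nonempty_iso W (V i)).mpr hi⟩

end FDRep

theorem det_charMatrix {G : Type} [Group G] [Fintype G] [DecidableEq G]
    (D : FDRep ℂ G)
    (r : ℕ) (V : Fin r → FDRep ℂ G)
    (hsimple : ∀ i, Simple (V i))
    (hpairwise : ∀ i j, i ≠ j → ¬ Nonempty (V i ≅ V j))
    (hcomplete : ∀ W : FDRep ℂ G, Simple W → ∃ i, Nonempty (W ≅ V i))
    (k : Fin r → ℂ)
    (hk : ∀ i, k i = (Fintype.card G : ℂ)⁻¹ * ∑ g : G, D.character g * (V i).character (g⁻¹)) :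
    (charMatrix D).det
      = ∏ i : Fin r,
          (k i * (Fintype.card G : ℂ) / (Module.finrank ℂ (V i) : ℂ))
            ^ ((Module.finrank ℂ (V i)) ^ 2) := by
  have hmul (i : Fin r) : k i * Fintype.card G = ∑ g, D.character g * (V i).character g⁻¹ := by
    rw [hk, mul_comm, mul_inv_cancel_left₀ (Nat.cast_ne_zero.mpr Fintype.card_ne_zero)]
  simp_rw [hmul]
  exact det_charMatrix_general V hsimple hpairwise hcomplete D.character D.char_conj
end

section
/- Let d ≥ 3 be a natural number and let M be the complex matrix with rows and columns indexed by S₃ defined by M_{σ,π} = d^{l(σ⁻¹π)}. Then M is invertible and M⁻¹ = (1/(d³(d²−1)²(d²−4))) · ( M² − 3d(d²+1)·M + 3d⁴(d²−1)·1 ), where 1 denotes the identity matrix. -/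
open Matrix

/-!
On `S₃` the number of cycles is determined by the sign, except that the identity has three cycles
rather than the single cycle of the other even permutations. Hence
`M = (d³ - d) • 1 + d • E + d² • O`, where `E` and `O` indicate the pairs with `σ⁻¹π` even and odd.
Counting points in the fibres of `sign` gives `E² = O² = 3E` and `EO = OE = 3O`. It follows that `M`
is annihilated by the cubic with roots `d(d+1)(d+2)`, `d(d²-1)` and `d(d-1)(d-2)`, its eigenvalues
on the trivial, standard and sign isotypic components, and the inverse is read off from the
coefficients of this cubic.
-/

section Cubic

variable {R A : Type*} [CommRing R] [Ring A] [Algebra R A]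

theorem mul_quadratic_eq_smul_one_of_cubic_eq_zero {a b c : R} {m : A}
    (h : (m - a • 1) * (m - b • 1) * (m - c • 1) = 0) :
    m * (m ^ 2 - (a + b + c) • m + (a * b + b * c + c * a) • 1) = (a * b * c) • 1 := by
  rw [← sub_eq_zero, ← h]
  simp only [pow_two, mul_sub, sub_mul, mul_add, smul_mul_assoc, mul_smul_comm, mul_one, one_mul,
    mul_assoc]
  module

theorem isUnit_det_and_inv_eq_of_cubic_eq_zero {n K : Type*} [Fintype n] [DecidableEq n] [Field K]
    {a b c : K} {M : Matrix n n K} (habc : a * b * c ≠ 0)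
    (h : (M - a • 1) * (M - b • 1) * (M - c • 1) = 0) :
    IsUnit M.det ∧
      M⁻¹ = (a * b * c)⁻¹ • (M ^ 2 - (a + b + c) • M + (a * b + b * c + c * a) • 1) := by
  have right_inv : M * ((a * b * c)⁻¹ •
      (M ^ 2 - (a + b + c) • M + (a * b + b * c + c * a) • 1)) = 1 := by
    rw [mul_smul_comm, mul_quadratic_eq_smul_one_of_cubic_eq_zero h, inv_smul_smul₀ habc]
  exact ⟨isUnit_det_of_right_inverse right_inv, inv_eq_right_inv right_inv⟩

end Cubic

section FiberMatrix

variable {G H : Type*} [Group G] [Group H] [DecidableEq H]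

/-- The indicator of the fibre `φ ⁻¹' {u}` as a matrix, read off at `g⁻¹ * h` so that matrix
multiplication is convolution of functions on `G`. -/
def fiberMatrix (R : Type*) [Zero R] [One R] (φ : G →* H) (u : H) : Matrix G G R :=
  of fun g h => if φ (g⁻¹ * h) = u then 1 else 0

theorem fiberMatrix_mul_fiberMatrix (R : Type*) [NonAssocSemiring R] [Fintype G] (φ : G →* H)
    {u : H} (hu : u ∈ φ.range) (v : H) :
    fiberMatrix R φ u * fiberMatrix R φ v = Nat.card φ.ker • fiberMatrix R φ (u * v) := by
  obtain ⟨s, rfl⟩ := hu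
  ext g h
  have middle_iff (k : G) : (φ (g⁻¹ * k) = φ s ∧ φ (k⁻¹ * h) = v) ↔
      φ k = φ (g * s) ∧ φ (g⁻¹ * h) = φ s * v := by
    simp only [map_mul, map_inv, inv_mul_eq_iff_eq_mul]
    refine and_congr_right fun hk => ?_
    rw [hk, mul_assoc]
  have card_fiber : (Finset.univ.filter fun k => φ k = φ (g * s)).card = Nat.card φ.ker := by
    rw [MonoidHom.card_fiber_eq_of_mem_range φ ⟨g * s, rfl⟩ ⟨1, map_one φ⟩, ← Fintype.card_subtype,
      ← Nat.card_eq_fintype_card]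
    rfl
  simp only [fiberMatrix, mul_apply, of_apply, Matrix.smul_apply, ite_zero_mul_ite_zero, mul_one,
    middle_iff]
  by_cases hgh : φ (g⁻¹ * h) = φ s * v
  · simp only [hgh, and_true, if_true, Finset.sum_boole, card_fiber, nsmul_one]
  · simp only [hgh, and_false, if_false, Finset.sum_const_zero, smul_zero]

theorem fiberMatrix_sign_fin_three_mul (R : Type*) [NonAssocSemiring R] (u v : ℤˣ) :
    fiberMatrix R (Equiv.Perm.sign (α := Fin 3)) u * fiberMatrix R Equiv.Perm.sign v =
      3 • fiberMatrix R Equiv.Perm.sign (u * v) := by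
  have card_ker : Nat.card (Equiv.Perm.sign (α := Fin 3)).ker = 3 := by
    have h : 2 * Nat.card (alternatingGroup (Fin 3)) = 6 := by
      rw [two_mul_nat_card_alternatingGroup, Nat.card_perm, Nat.card_fin]; rfl
    change Nat.card (alternatingGroup (Fin 3)) = 3
    omega
  rw [fiberMatrix_mul_fiberMatrix R _ (Equiv.Perm.sign_surjective (Fin 3) u), card_ker]

end FiberMatrix

section CycleCountMatrix

theorem cycleCount_fin_three (σ : Equiv.Perm (Fin 3)) :
    cycleCount σ = if σ = 1 then 3 else if Equiv.Perm.sign σ = 1 then 1 else 2 := by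
  decide +kernel +revert

/-- The matrix `x ^ l(σ⁻¹π)` indexed by the permutations of `n` points, with an arbitrary element
`x` in place of the natural number `d`. -/
def cycleCountMatrix {R : Type*} [Monoid R] (n : ℕ) (x : R) :
    Matrix (Equiv.Perm (Fin n)) (Equiv.Perm (Fin n)) R :=
  of fun σ π => x ^ cycleCount (σ⁻¹ * π)

variable {R : Type*} [CommRing R] (x : R)

theorem cycleCountMatrix_three_eq :
    cycleCountMatrix 3 x = (x ^ 3 - x) • 1 + x • fiberMatrix R Equiv.Perm.sign 1 +
      x ^ 2 • fiberMatrix R Equiv.Perm.sign (-1) := by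
  ext σ π
  simp only [cycleCountMatrix, fiberMatrix, of_apply, Matrix.add_apply, Matrix.smul_apply,
    one_apply, cycleCount_fin_three, inv_mul_eq_one, smul_eq_mul]
  rcases eq_or_ne σ π with rfl | hne
  · simp
  · rcases Int.units_eq_one_or (Equiv.Perm.sign (σ⁻¹ * π)) with hsign | hsign <;>
      simp only [hne, hsign, if_false, if_true] <;> simp

theorem cycleCountMatrix_three_cubic_eq_zero :
    (cycleCountMatrix 3 x - (x * (x + 1) * (x + 2)) • 1) *
      (cycleCountMatrix 3 x - (x * (x ^ 2 - 1)) • 1) *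
      (cycleCountMatrix 3 x - (x * (x - 1) * (x - 2)) • 1) = 0 := by
  rw [cycleCountMatrix_three_eq]
  set E := fiberMatrix R (Equiv.Perm.sign (α := Fin 3)) 1
  set O := fiberMatrix R (Equiv.Perm.sign (α := Fin 3)) (-1)
  have hEE : E * E = 3 • E := fiberMatrix_sign_fin_three_mul R 1 1
  have hEO : E * O = 3 • O := fiberMatrix_sign_fin_three_mul R 1 (-1)
  have hOE : O * E = 3 • O := fiberMatrix_sign_fin_three_mul R (-1) 1
  have hOO : O * O = 3 • E := fiberMatrix_sign_fin_three_mul R (-1) (-1)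
  simp only [mul_add, add_mul, mul_sub, sub_mul, smul_mul_assoc, mul_smul_comm, mul_one, one_mul,
    hEE, hEO, hOE, hOO]
  module

end CycleCountMatrix

theorem inv_M_S3_general {K : Type*} [Field K] {x : K} (hx0 : x ≠ 0) (hx1 : x ^ 2 ≠ 1)
    (hx4 : x ^ 2 ≠ 4) (M : Matrix (Equiv.Perm (Fin 3)) (Equiv.Perm (Fin 3)) K)
    (hM : ∀ σ π : Equiv.Perm (Fin 3), M σ π = x ^ cycleCount (σ⁻¹ * π)) :
    IsUnit M.det ∧
      M⁻¹ = (x ^ 3 * (x ^ 2 - 1) ^ 2 * (x ^ 2 - 4))⁻¹ •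
        (M ^ 2 - (3 * x * (x ^ 2 + 1)) • M + (3 * x ^ 4 * (x ^ 2 - 1)) • 1) := by
  obtain rfl : M = cycleCountMatrix 3 x := Matrix.ext hM
  have roots_sum : x * (x + 1) * (x + 2) + x * (x ^ 2 - 1) + x * (x - 1) * (x - 2) =
      3 * x * (x ^ 2 + 1) := by ring
  have roots_pairs : x * (x + 1) * (x + 2) * (x * (x ^ 2 - 1)) +
      x * (x ^ 2 - 1) * (x * (x - 1) * (x - 2)) +
      x * (x - 1) * (x - 2) * (x * (x + 1) * (x + 2)) = 3 * x ^ 4 * (x ^ 2 - 1) := by ring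
  have roots_prod : x * (x + 1) * (x + 2) * (x * (x ^ 2 - 1)) * (x * (x - 1) * (x - 2)) =
      x ^ 3 * (x ^ 2 - 1) ^ 2 * (x ^ 2 - 4) := by ring
  have roots_prod_ne_zero : x ^ 3 * (x ^ 2 - 1) ^ 2 * (x ^ 2 - 4) ≠ 0 :=
    mul_ne_zero (mul_ne_zero (pow_ne_zero 3 hx0) (pow_ne_zero 2 (sub_ne_zero.2 hx1)))
      (sub_ne_zero.2 hx4)
  have inverse := isUnit_det_and_inv_eq_of_cubic_eq_zero (roots_prod ▸ roots_prod_ne_zero)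
    (cycleCountMatrix_three_cubic_eq_zero x)
  rwa [roots_prod, roots_sum, roots_pairs] at inverse

theorem inv_M_S3 (d : ℕ) (hd : 3 ≤ d)
    (M : Matrix (Equiv.Perm (Fin 3)) (Equiv.Perm (Fin 3)) ℂ)
    (hM : ∀ σ π : Equiv.Perm (Fin 3), M σ π = (d : ℂ) ^ cycleCount (σ⁻¹ * π)) :
    IsUnit M.det ∧
      M⁻¹ = ((d : ℂ) ^ 3 * ((d : ℂ) ^ 2 - 1) ^ 2 * ((d : ℂ) ^ 2 - 4))⁻¹ •
        (M ^ 2 - (3 * (d : ℂ) * ((d : ℂ) ^ 2 + 1)) • M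
          + (3 * (d : ℂ) ^ 4 * ((d : ℂ) ^ 2 - 1)) • (1 : Matrix (Equiv.Perm (Fin 3)) (Equiv.Perm (Fin 3)) ℂ)) := by
  exact inv_M_S3_general (x := (d : ℂ)) (by norm_cast; lia) (by norm_cast; nlinarith)
    (by norm_cast; nlinarith) M hM
end

section
/- Let d ≥ 4 be a natural number and let M be the complex matrix with rows and columns indexed by S₄ defined by M_{σ,π} = d^{l(σ⁻¹π)}. Then M is invertible and M⁻¹ = (1/s₅)·( M⁴ − s₁·M³ + s₂·M² − s₃·M + s₄·1 ), where s₁ = d²(5d²+19), s₂ = 2d²(d²−1)(5d⁴+23d²+20), s₃ = 2d⁴(d²−1)²(5d⁴+7d²+12), s₄ = d⁴(d²−1)³(d²−4)(5d⁴−9d²+36), s₅ = d⁶(d²−1)⁴(d²−4)²(d²−9), and 1 denotes the identity matrix. -/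
open Matrix

/-!
The matrix `M` is the group matrix of the class function `σ ↦ x ^ l(σ)`. Expanding this class
function in irreducible characters gives `M = ∑ λ, c_λ(x) • E_λ`, where the `E_λ` are the central
idempotents of the five partitions `λ` of `4` and `c_λ(x)` is the product of `x + content` over the
boxes of `λ`. Hence `c ↦ ∑ λ, c_λ • E_λ` is an algebra homomorphism from `R⁵` taking `c(x)` to `M`,
and the formula for `M⁻¹` only has to be checked on the five eigenvalues, whose elementary
symmetric polynomials are `s₁, …, s₅`.
-/

section Idempotents

variable {ι R A : Type*} [Fintype ι] [CommSemiring R] [Semiring A] [Algebra R A]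

/-- The algebra homomorphism `c ↦ ∑ i, c i • e i` attached to a complete family of orthogonal
idempotents, by which identities between linear combinations of the `e i` are checked on the
coefficients. -/
def idempotentCombination {e : ι → A} (he : CompleteOrthogonalIdempotents e) :
    (ι → R) →ₐ[R] A :=
  AlgHom.ofLinearMap (Fintype.linearCombination R e)
    (by simp [Fintype.linearCombination_apply, he.complete])
    (fun a b => by
      classical
      simp [Fintype.linearCombination_apply, Finset.sum_mul_sum, he.mul_eq, smul_smul, mul_comm])

theorem idempotentCombination_apply {e : ι → A} (he : CompleteOrthogonalIdempotents e)
    (c : ι → R) : idempotentCombination he c = ∑ i, c i • e i :=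
  rfl

end Idempotents

section GroupMatrix

variable {ι G R : Type*} [Group G]

/-- Frobenius' group matrix of a function on a group: the rows and columns are indexed by the
group, and the entry at `(σ, π)` depends on `σ⁻¹ * π` only. -/
def groupMatrix (f : G → R) : Matrix G G R :=
  Matrix.of fun σ π => f (σ⁻¹ * π)

theorem groupMatrix_apply (f : G → R) (σ π : G) : groupMatrix f σ π = f (σ⁻¹ * π) :=
  rfl

theorem groupMatrix_mul_groupMatrix [Fintype G] [NonUnitalNonAssocSemiring R] (f h : G → R) :
    groupMatrix f * groupMatrix h = groupMatrix fun g => ∑ r, f r * h (r⁻¹ * g) := by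
  ext σ π
  rw [Matrix.mul_apply, ← Equiv.sum_comp (Equiv.mulLeft σ)]
  simp [groupMatrix_apply, mul_assoc]

theorem groupMatrix_ite_eq_one [DecidableEq G] [Zero R] [One R] :
    groupMatrix (fun g : G => if g = 1 then (1 : R) else 0) = 1 := by
  ext σ π
  simp [groupMatrix_apply, Matrix.one_apply, inv_mul_eq_one]

theorem sum_smul_groupMatrix [Fintype ι] [NonUnitalNonAssocSemiring R] (c : ι → R)
    (f : ι → G → R) :
    ∑ i, c i • groupMatrix (f i) = groupMatrix fun g => ∑ i, c i * f i g := by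
  ext σ π
  simp [groupMatrix_apply, Matrix.sum_apply]

theorem completeOrthogonalIdempotents_groupMatrix [Fintype ι] [Fintype G] [DecidableEq G]
    [Semiring R] {f : ι → G → R}
    (ortho : Pairwise fun i j => ∀ g, ∑ r, f i r * f j (r⁻¹ * g) = 0)
    (complete : ∀ g, ∑ i, f i g = if g = 1 then 1 else 0) :
    CompleteOrthogonalIdempotents fun i => groupMatrix (f i) := by
  refine CompleteOrthogonalIdempotents.iff_ortho_complete.2 ⟨fun i j hij => ?_, ?_⟩
  · ext σ π
    simp [groupMatrix_mul_groupMatrix, groupMatrix_apply, ortho hij]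
  · simpa [complete, groupMatrix_ite_eq_one] using sum_smul_groupMatrix (fun _ => (1 : R)) f

end GroupMatrix

/-- The irreducible characters of `S₄` at `σ`, indexed by the partitions `(4)`, `(3,1)`, `(2,2)`,
`(2,1,1)`, `(1,1,1,1)` in this order. The one of `(2,2)` is read off the symmetric square of the
permutation representation, which is the sum of `(2,2)` and of two copies of the permutation
representation `(4) + (3,1)`; the division by `2` is exact. -/
def characterS4 (σ : Equiv.Perm (Fin 4)) : Fin 5 → ℤ :=
  let fix (τ : Equiv.Perm (Fin 4)) : ℤ := (Finset.univ.filter fun x => τ x = x).card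
  ![1, fix σ - 1, (fix σ ^ 2 + fix (σ * σ)) / 2 - 2 * fix σ, σ.sign * (fix σ - 1), σ.sign]

theorem cycleCount_characterS4_mem_characterTable (σ : Equiv.Perm (Fin 4)) :
    (cycleCount σ, characterS4 σ) ∈
      [(4, ![1, 3, 2, 3, 1]),
       (3, ![1, 1, 0, -1, -1]),
       (2, ![1, -1, 2, -1, 1]),
       (2, ![1, 0, -1, 0, 1]),
       (1, ![1, -1, 0, 1, -1])] := by
  revert σ
  decide +kernel

theorem characterS4_one : characterS4 1 = ![1, 3, 2, 3, 1] := by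
  decide

theorem sum_characterS4_mul_characterS4_inv_mul :
    Pairwise fun i j => ∀ g, ∑ r, characterS4 r i * characterS4 (r⁻¹ * g) j = 0 := by
  unfold Pairwise
  decide +kernel

theorem sum_characterS4_one_mul_characterS4 (σ : Equiv.Perm (Fin 4)) :
    ∑ i, characterS4 1 i * characterS4 σ i = if σ = 1 then 24 else 0 := by
  revert σ
  decide +kernel

section CommRing

variable {R : Type*} [CommRing R]

/-- The products of `x + content` over the boxes of the partitions `(4)`, `(3,1)`, `(2,2)`,
`(2,1,1)`, `(1,1,1,1)`, where the content of a box is its column minus its row. These are the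
eigenvalues of the group matrix of `σ ↦ x ^ cycleCount σ`. -/
def contentProductS4 (x : R) : Fin 5 → R :=
  ![x * (x + 1) * (x + 2) * (x + 3),
    x * (x + 1) * (x + 2) * (x - 1),
    x * (x + 1) * (x - 1) * x,
    x * (x + 1) * (x - 1) * (x - 2),
    x * (x - 1) * (x - 2) * (x - 3)]

theorem sum_contentProductS4_mul_characterS4 (x : R) (σ : Equiv.Perm (Fin 4)) :
    ∑ i, contentProductS4 x i * (characterS4 1 i * characterS4 σ i : ℤ) =
      24 * x ^ cycleCount σ := by
  have htable := cycleCount_characterS4_mem_characterTable σ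
  simp only [List.mem_cons, Prod.mk.injEq, List.not_mem_nil, or_false] at htable
  rcases htable with ⟨hl, hχ⟩ | ⟨hl, hχ⟩ | ⟨hl, hχ⟩ | ⟨hl, hχ⟩ | ⟨hl, hχ⟩ <;>
    rw [hl, hχ, characterS4_one] <;>
    simp only [Fin.sum_univ_five, contentProductS4, Matrix.cons_val] <;>
    push_cast <;> ring

-- Vieta: the coefficients are the elementary symmetric polynomials of the entries of
-- `contentProductS4 x`.
theorem contentProductS4_mul_quartic (x : R) :
    contentProductS4 x *
      (contentProductS4 x ^ 4 - (x ^ 2 * (5 * x ^ 2 + 19)) • contentProductS4 x ^ 3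
        + (2 * x ^ 2 * (x ^ 2 - 1) * (5 * x ^ 4 + 23 * x ^ 2 + 20)) • contentProductS4 x ^ 2
        - (2 * x ^ 4 * (x ^ 2 - 1) ^ 2 * (5 * x ^ 4 + 7 * x ^ 2 + 12)) • contentProductS4 x
        + (x ^ 4 * (x ^ 2 - 1) ^ 3 * (x ^ 2 - 4) * (5 * x ^ 4 - 9 * x ^ 2 + 36)) • 1) =
      (x ^ 6 * (x ^ 2 - 1) ^ 4 * (x ^ 2 - 4) ^ 2 * (x ^ 2 - 9)) • 1 := by
  ext i
  simp only [Pi.mul_apply, Pi.add_apply, Pi.sub_apply, Pi.smul_apply, Pi.pow_apply, Pi.one_apply,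
    smul_eq_mul]
  fin_cases i <;> simp only [contentProductS4, Fin.reduceFinMk, Matrix.cons_val] <;> ring

variable [Invertible (24 : R)]

variable (R) in
/-- The central idempotents `(χ 1 / 24) ∑ σ, χ σ • σ` of the group algebra of `S₄`, for the
irreducible characters `χ` in the order of `characterS4`, written as group matrices. -/
def centralIdempotentS4 (i : Fin 5) : Matrix (Equiv.Perm (Fin 4)) (Equiv.Perm (Fin 4)) R :=
  groupMatrix fun σ => ⅟24 * (characterS4 1 i * characterS4 σ i : ℤ)

variable (R) in
theorem completeOrthogonalIdempotents_centralIdempotentS4 :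
    CompleteOrthogonalIdempotents (centralIdempotentS4 R) := by
  refine completeOrthogonalIdempotents_groupMatrix (fun i j hij g => ?_) fun g => ?_
  · calc ∑ r, (⅟24 * (characterS4 1 i * characterS4 r i : ℤ) : R) *
          (⅟24 * (characterS4 1 j * characterS4 (r⁻¹ * g) j : ℤ))
        = ⅟24 * ⅟24 * (characterS4 1 i * characterS4 1 j *
            ∑ r, characterS4 r i * characterS4 (r⁻¹ * g) j : ℤ) := by
          push_cast
          rw [Finset.mul_sum, Finset.mul_sum]
          exact Finset.sum_congr rfl fun r _ => by ring
      _ = 0 := by simp [sum_characterS4_mul_characterS4_inv_mul hij g]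
  · rw [← Finset.mul_sum, ← Int.cast_sum, sum_characterS4_one_mul_characterS4]
    split_ifs <;> simp

theorem idempotentCombination_contentProductS4 (x : R) :
    idempotentCombination (completeOrthogonalIdempotents_centralIdempotentS4 R)
      (contentProductS4 x) = groupMatrix fun σ => x ^ cycleCount σ := by
  simp only [idempotentCombination_apply, centralIdempotentS4, sum_smul_groupMatrix]
  congr 1 with σ
  simp only [mul_left_comm _ (⅟24 : R), ← Finset.mul_sum, sum_contentProductS4_mul_characterS4,
    invOf_mul_cancel_left']

theorem inv_M_S4_general (x : R)
    (hx : IsUnit (x ^ 6 * (x ^ 2 - 1) ^ 4 * (x ^ 2 - 4) ^ 2 * (x ^ 2 - 9)))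
    (M : Matrix (Equiv.Perm (Fin 4)) (Equiv.Perm (Fin 4)) R)
    (hM : ∀ σ π : Equiv.Perm (Fin 4), M σ π = x ^ cycleCount (σ⁻¹ * π)) :
    IsUnit M.det ∧
      M⁻¹ = Ring.inverse (x ^ 6 * (x ^ 2 - 1) ^ 4 * (x ^ 2 - 4) ^ 2 * (x ^ 2 - 9)) •
        (M ^ 4 - (x ^ 2 * (5 * x ^ 2 + 19)) • M ^ 3
          + (2 * x ^ 2 * (x ^ 2 - 1) * (5 * x ^ 4 + 23 * x ^ 2 + 20)) • M ^ 2
          - (2 * x ^ 4 * (x ^ 2 - 1) ^ 2 * (5 * x ^ 4 + 7 * x ^ 2 + 12)) • M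
          + (x ^ 4 * (x ^ 2 - 1) ^ 3 * (x ^ 2 - 4) * (5 * x ^ 4 - 9 * x ^ 2 + 36)) • 1) := by
  have hφ : idempotentCombination (completeOrthogonalIdempotents_centralIdempotentS4 R)
      (contentProductS4 x) = M := by
    ext σ π
    rw [idempotentCombination_contentProductS4, groupMatrix_apply, hM]
  have hquintic := congrArg
    (idempotentCombination (completeOrthogonalIdempotents_centralIdempotentS4 R))
    (contentProductS4_mul_quartic x)
  simp only [map_mul, map_add, map_sub, map_smul, map_pow, map_one, hφ] at hquintic
  have hinv := congrArg (Ring.inverse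
    (x ^ 6 * (x ^ 2 - 1) ^ 4 * (x ^ 2 - 4) ^ 2 * (x ^ 2 - 9)) • ·) hquintic
  simp only [smul_smul, Ring.inverse_mul_cancel _ hx, one_smul, ← Matrix.mul_smul] at hinv
  exact ⟨Matrix.isUnit_det_of_right_inverse hinv, Matrix.inv_eq_right_inv hinv⟩

end CommRing

theorem prod_eigenvalues_natCast_ne_zero {K : Type*} [Field K] [CharZero K] {d : ℕ} (hd : 4 ≤ d) :
    (d : K) ^ 6 * ((d : K) ^ 2 - 1) ^ 4 * ((d : K) ^ 2 - 4) ^ 2 * ((d : K) ^ 2 - 9) ≠ 0 := by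
  have hsq : 16 ≤ d ^ 2 := Nat.pow_le_pow_left hd 2
  have h₀ : (d : K) ≠ 0 := by exact_mod_cast (by lia : d ≠ 0)
  have h₁ : (d : K) ^ 2 ≠ 1 := by exact_mod_cast (by lia : d ^ 2 ≠ 1)
  have h₂ : (d : K) ^ 2 ≠ 4 := by exact_mod_cast (by lia : d ^ 2 ≠ 4)
  have h₃ : (d : K) ^ 2 ≠ 9 := by exact_mod_cast (by lia : d ^ 2 ≠ 9)
  simp [h₀, sub_eq_zero, h₁, h₂, h₃]

theorem inv_M_S4 (d : ℕ) (hd : 4 ≤ d)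
    (M : Matrix (Equiv.Perm (Fin 4)) (Equiv.Perm (Fin 4)) ℂ)
    (hM : ∀ σ π : Equiv.Perm (Fin 4), M σ π = (d : ℂ) ^ cycleCount (σ⁻¹ * π)) :
    IsUnit M.det ∧
      M⁻¹ = ((d : ℂ) ^ 6 * ((d : ℂ) ^ 2 - 1) ^ 4 * ((d : ℂ) ^ 2 - 4) ^ 2 * ((d : ℂ) ^ 2 - 9))⁻¹ •
        (M ^ 4 - ((d : ℂ) ^ 2 * (5 * (d : ℂ) ^ 2 + 19)) • M ^ 3
          + (2 * (d : ℂ) ^ 2 * ((d : ℂ) ^ 2 - 1) * (5 * (d : ℂ) ^ 4 + 23 * (d : ℂ) ^ 2 + 20)) • M ^ 2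
          - (2 * (d : ℂ) ^ 4 * ((d : ℂ) ^ 2 - 1) ^ 2 * (5 * (d : ℂ) ^ 4 + 7 * (d : ℂ) ^ 2 + 12)) • M
          + ((d : ℂ) ^ 4 * ((d : ℂ) ^ 2 - 1) ^ 3 * ((d : ℂ) ^ 2 - 4) * (5 * (d : ℂ) ^ 4 - 9 * (d : ℂ) ^ 2 + 36)) •
            (1 : Matrix (Equiv.Perm (Fin 4)) (Equiv.Perm (Fin 4)) ℂ)) := by
  have : Invertible (24 : ℂ) := invertibleOfNonzero (by norm_num)
  simpa only [Ring.inverse_eq_inv'] using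
    inv_M_S4_general (d : ℂ) (isUnit_iff_ne_zero.2 (prod_eigenvalues_natCast_ne_zero hd)) M hM
end
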